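/- arXiv:1608.04018 — 3 statements merged into one kernel-verified Lean document; each statement's English description precedes it below -/
import Mathlib

section
/- Let μ be a partition of m ≥ 1 and let n ≥ 1. There exists a conjugate-semistandard tableau family of shape μ^n whose weight dominates the weight of every conjugate-semistandard tableau family of shape μ^n if and only if m = 1, or n = 1, or μ is rectangular (all of its parts are equal) and n = 2. -/
/-!
Every conjugate-semistandard tableau `t` satisfies `t (i, j) ≥ j + 1` (zero-indexed boxes), so the
tableau `minT` with these entries is the least one. Write `deficit t s` for the number of boxes
`(i, j)` with `j + 1 ≤ s < t (i, j)`. The number of entries of `t` that are at most `s` is the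
number for `minT` minus `deficit t s`, so among families of the same size, a weight is dominant
exactly when the total deficit of its family is least at every `s` simultaneously
(`domLE_iff_deficit`).

For a corner `c = (i, j)` of the diagram, the staircase family consists of the tableaux obtained
from `minT` by adding `0, 1, …, n - 1` to the entry in `c`; its total deficit is `0` for `s ≤ j` and
`n - (s - j)`, truncated at zero, for `s > j`. Let `a` be the number of columns.

* In each of the three exceptional cases the staircase at the corner of column `a` is optimal:
  for `s ≥ a` at most `s - a + 1` distinct tableaux of the family can have deficit `0` at `s`.
* If `μ` is not rectangular and `n = 2`, the staircases at corners in two different columns force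
  every deficit of a dominant family to vanish, so that both of its members equal `minT`.
* If `n ≥ 3` and `m ≥ 2`, comparison with the staircase at the corner `c` of column `a` shows that
  the members of a dominant family agree with `minT` except possibly at `c`
  (`eq_raise_of_deficit`). So at most two of them have no entry exceeding `a + 1`, and the total
  deficit at `a + 1` is at least `n - 2`. Replacing the last member of the staircase by
  `minT + 1` lowers this to `n - 3`, a contradiction.
-/


/-- The boxes of the Young diagram of `μ : ℕ → ℕ`, zero-indexed:
row `i` consists of the boxes `(i, j)` for `j < μ i`. -/
abbrev Box (μ : ℕ → ℕ) : Type := {p : ℕ × ℕ // p.2 < μ p.1}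

/-- The multiset of entries of the tableau `t` in row `i`. -/
def rowM (μ : ℕ → ℕ) {Ω : Type*} (t : Box μ → Ω) (i : ℕ) : Multiset Ω :=
  ((Finset.range (μ i)).attach.val).map fun j => t ⟨(i, j.1), Finset.mem_range.mp j.2⟩

/-- A `μ`-tableau with entries in the positive integers is conjugate-semistandard if its rows are
strictly increasing and its columns are weakly increasing. -/
def ConjSemistandard (μ : ℕ → ℕ) (t : Box μ → ℕ) : Prop :=
  (∀ b, 1 ≤ t b) ∧
  (∀ i j j' (h : j < μ i) (h' : j' < μ i), j < j' → t ⟨(i, j), h⟩ < t ⟨(i, j'), h'⟩) ∧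
  (∀ i i' j (h : j < μ i) (h' : j < μ i'), i < i' → t ⟨(i, j), h⟩ ≤ t ⟨(i', j), h'⟩)

/-- The number of boxes of the tableau `t` (whose shape has at most `k` rows) with entry `e`. -/
def entryCount (μ : ℕ → ℕ) (k : ℕ) (t : Box μ → ℕ) (e : ℕ) : ℕ :=
  ∑ i ∈ Finset.range k, (rowM μ t i).count e

/-- The weight of a family of tableaux: `familyWeight μ k T e` is the total number of boxes with
entry `e` over all the tableaux in `T`. -/
def familyWeight (μ : ℕ → ℕ) (k : ℕ) (T : Finset (Box μ → ℕ)) (e : ℕ) : ℕ :=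
  ∑ t ∈ T, entryCount μ k t e

/-- For conjugate-semistandard tableaux (whose rows are strictly increasing), `v` majorizes `u`,
written `u ⪯_maj v`, exactly when each row of `v` majorizes the corresponding row of `u`,
i.e. when the entries compare box-by-box. -/
def Maj (μ : ℕ → ℕ) (u v : Box μ → ℕ) : Prop := ∀ b, u b ≤ v b

/-- A conjugate-semistandard tableau family is closed if it is downwards closed under the
majorization order. -/
def ClosedFamily (μ : ℕ → ℕ) (T : Finset (Box μ → ℕ)) : Prop :=
  ∀ v ∈ T, ∀ u, ConjSemistandard μ u → Maj μ u v → u ∈ T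

/-- A (1-indexed) weight `w` is weakly decreasing when `w (j+1) ≤ w j` for all `j ≥ 1`. -/
def WeaklyDecr (w : ℕ → ℕ) : Prop := ∀ j, 1 ≤ j → w (j + 1) ≤ w j

/-- The conjugate of a (1-indexed) finitely supported sequence `w` whose support is contained in
`{1, …, N}`:  `conjOf w N i = #{j ≥ 1 : w j ≥ i}`. -/
def conjOf (w : ℕ → ℕ) (N : ℕ) (i : ℕ) : ℕ :=
  ((Finset.Icc 1 N).filter fun j => i ≤ w j).card

/-- Dominance order on (1-indexed) sequences: `f ⊴ g` iff every partial sum of `f` is at most the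
corresponding partial sum of `g`. -/
def DomLE (f g : ℕ → ℕ) : Prop :=
  ∀ s, ∑ j ∈ Finset.Icc 1 s, f j ≤ ∑ j ∈ Finset.Icc 1 s, g j

/-- Strict lexicographic order on (1-indexed) sequences. -/
def LexLT (f g : ℕ → ℕ) : Prop :=
  ∃ j, 1 ≤ j ∧ (∀ j', 1 ≤ j' → j' < j → f j' = g j') ∧ f j < g j

/-- Lexicographic order on (1-indexed) sequences. -/
def LexLE (f g : ℕ → ℕ) : Prop := (∀ j, 1 ≤ j → f j = g j) ∨ LexLT f g

/-! ### Counting entries and deficits -/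

theorem card_row_filter (μ : ℕ → ℕ) [Fintype (Box μ)] (t : Box μ → ℕ) (e i : ℕ) :
    (rowM μ t i).count e
      = (Finset.univ.filter fun b : Box μ => t b = e ∧ b.1.1 = i).card := by
  classical
  unfold rowM
  rw [Multiset.count_map]
  change ((Finset.range (μ i)).attach.filter
    fun j => e = t ⟨(i, j.1), Finset.mem_range.mp j.2⟩).card = _
  refine Finset.card_bij (fun j _ => ⟨(i, j.1), Finset.mem_range.mp j.2⟩) ?_ ?_ ?_
  · intro j hj
    exact Finset.mem_filter.mpr ⟨Finset.mem_univ _, (Finset.mem_filter.mp hj).2.symm, rfl⟩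
  · intro j _ j' _ h
    exact Subtype.ext (congrArg (fun b : Box μ => b.1.2) h)
  · rintro ⟨⟨i', j⟩, hb⟩ h
    simp only [Finset.mem_filter, Finset.mem_univ, true_and] at h
    obtain ⟨h1, rfl⟩ := h
    exact ⟨⟨j, Finset.mem_range.mpr hb⟩, by simp [h1], rfl⟩

theorem entryCount_eq (μ : ℕ → ℕ) (k : ℕ) (hk : ∀ i, k ≤ i → μ i = 0) [Fintype (Box μ)]
    (t : Box μ → ℕ) (e : ℕ) :
    entryCount μ k t e = (Finset.univ.filter fun b : Box μ => t b = e).card := by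
  classical
  unfold entryCount
  rw [Finset.card_eq_sum_card_fiberwise (f := fun b : Box μ => b.1.1) (t := Finset.range k)]
  · refine Finset.sum_congr rfl fun i _ => ?_
    rw [card_row_filter, Finset.filter_filter]
  · intro b _
    simp only [Finset.coe_range, Set.mem_Iio]
    by_contra h
    have := hk b.1.1 (by omega)
    have := b.2
    omega

theorem sum_entryCount (μ : ℕ → ℕ) (k : ℕ) (hk : ∀ i, k ≤ i → μ i = 0) [Fintype (Box μ)]
    (t : Box μ → ℕ) (ht : ConjSemistandard μ t) (s : ℕ) :
    ∑ e ∈ Finset.Icc 1 s, entryCount μ k t e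
      = (Finset.univ.filter fun b : Box μ => t b ≤ s).card := by
  classical
  rw [Finset.card_eq_sum_card_fiberwise (f := t) (t := Finset.Icc 1 s)]
  · refine Finset.sum_congr rfl fun e he => ?_
    rw [entryCount_eq μ k hk, Finset.filter_filter]
    congr 1
    ext b
    simp only [Finset.mem_Icc] at he
    simp only [Finset.mem_filter, Finset.mem_univ, true_and]
    omega
  · intro b hb
    simp only [Finset.coe_filter, Finset.mem_univ, true_and, Set.mem_ofPred_eq] at hb
    simpa using ⟨ht.1 b, hb⟩

theorem le_of_conjSemistandard {μ : ℕ → ℕ} {t : Box μ → ℕ} (ht : ConjSemistandard μ t)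
    (b : Box μ) : b.1.2 + 1 ≤ t b := by
  obtain ⟨⟨i, j⟩, hb⟩ := b
  induction j with
  | zero => exact ht.1 _
  | succ j ih =>
    have h1 : j < μ i := by simp only at hb; omega
    have := ih h1
    have := ht.2.1 i j (j + 1) h1 hb (by omega)
    simp only at *
    omega

/-- The number of boxes in the first `s` columns whose entry exceeds `s`. In the least tableau all
entries in these boxes are at most `s`, so this is the number of entries at most `s` that `t` lacks
in comparison. -/
def deficit (μ : ℕ → ℕ) [Fintype (Box μ)] (t : Box μ → ℕ) (s : ℕ) : ℕ :=
  (Finset.univ.filter fun b : Box μ => b.1.2 + 1 ≤ s ∧ s < t b).card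

theorem count_add_deficit {μ : ℕ → ℕ} [Fintype (Box μ)] {t : Box μ → ℕ}
    (ht : ConjSemistandard μ t) (s : ℕ) :
    (Finset.univ.filter fun b : Box μ => t b ≤ s).card + deficit μ t s
      = (Finset.univ.filter fun b : Box μ => b.1.2 + 1 ≤ s).card := by
  classical
  unfold deficit
  rw [← Finset.card_union_of_disjoint]
  · congr 1
    ext b
    have := le_of_conjSemistandard ht b
    simp only [Finset.mem_union, Finset.mem_filter, Finset.mem_univ, true_and]
    omega
  · rw [Finset.disjoint_left]
    intro b
    simp only [Finset.mem_filter, Finset.mem_univ, true_and]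
    omega

theorem sum_familyWeight_add_deficit {μ : ℕ → ℕ} {k : ℕ} (hk : ∀ i, k ≤ i → μ i = 0)
    [Fintype (Box μ)] {T : Finset (Box μ → ℕ)} (hT : ∀ t ∈ T, ConjSemistandard μ t) (s : ℕ) :
    ∑ e ∈ Finset.Icc 1 s, familyWeight μ k T e + ∑ t ∈ T, deficit μ t s
      = T.card * (Finset.univ.filter fun b : Box μ => b.1.2 + 1 ≤ s).card := by
  unfold familyWeight
  rw [Finset.sum_comm, ← Finset.sum_add_distrib, ← smul_eq_mul, ← Finset.sum_const]
  refine Finset.sum_congr rfl fun t ht => ?_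
  rw [sum_entryCount μ k hk t (hT t ht), count_add_deficit (hT t ht)]

theorem domLE_iff_deficit {μ : ℕ → ℕ} {k : ℕ} (hk : ∀ i, k ≤ i → μ i = 0)
    [Fintype (Box μ)] {S T : Finset (Box μ → ℕ)} (hS : ∀ t ∈ S, ConjSemistandard μ t)
    (hT : ∀ t ∈ T, ConjSemistandard μ t) (hc : S.card = T.card) :
    DomLE (familyWeight μ k S) (familyWeight μ k T)
      ↔ ∀ s, ∑ t ∈ T, deficit μ t s ≤ ∑ t ∈ S, deficit μ t s := by
  refine forall_congr' fun s => ?_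
  have h1 := sum_familyWeight_add_deficit hk hS s
  have h2 := sum_familyWeight_add_deficit hk hT s
  rw [hc] at h1
  omega

theorem deficit_eq_zero {μ : ℕ → ℕ} [Fintype (Box μ)] {t : Box μ → ℕ} {s : ℕ} :
    deficit μ t s = 0 ↔ ∀ b : Box μ, b.1.2 + 1 ≤ s → t b ≤ s := by
  simp [deficit, Finset.filter_eq_empty_iff]

theorem card_le_card_filter_add_sum {α : Type*} (T : Finset α) (f : α → ℕ) :
    T.card ≤ (T.filter fun t => f t = 0).card + ∑ t ∈ T, f t := by
  rw [Finset.card_filter, ← Finset.sum_add_distrib, Finset.card_eq_sum_ones]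
  refine Finset.sum_le_sum fun t _ => ?_
  split_ifs <;> omega

/-! ### Tableaux close to the least one -/

/-- The tableau with entry `j + 1 + r` in the box `c = (i, j)` and entry `j' + 1` in every other box
`(i', j')`. For `r = 0` it is the least conjugate-semistandard tableau. -/
def raise (μ : ℕ → ℕ) (c : Box μ) (r : ℕ) (b : Box μ) : ℕ :=
  if b = c then b.1.2 + 1 + r else b.1.2 + 1

/-- The box `c` is a corner: it is last in its row and last in its column. -/
def IsOuterCorner (μ : ℕ → ℕ) (c : Box μ) : Prop :=
  μ c.1.1 = c.1.2 + 1 ∧ μ (c.1.1 + 1) ≤ c.1.2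

theorem raise_conjSemistandard {μ : ℕ → ℕ} (hμ : Antitone μ) {c : Box μ} (hc : IsOuterCorner μ c)
    (r : ℕ) : ConjSemistandard μ (raise μ c r) := by
  obtain ⟨⟨i0, j0⟩, hc0⟩ := c
  obtain ⟨h1, h2⟩ := hc
  simp only at h1 h2
  refine ⟨fun b => ?_, fun i j j' h h' hj => ?_, fun i i' j h h' hi => ?_⟩
  · unfold raise; split_ifs <;> omega
  · simp only [raise, Subtype.mk.injEq, Prod.mk.injEq]
    by_cases hh : i = i0
    · subst hh; split_ifs <;> omega
    · simp [hh, hj]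
  · simp only [raise, Subtype.mk.injEq, Prod.mk.injEq]
    by_cases hh : i = i0
    · subst hh
      have : μ i' ≤ μ (i + 1) := hμ hi
      split_ifs <;> omega
    · simp only [hh, false_and, if_false]; split_ifs <;> omega

theorem deficit_raise {μ : ℕ → ℕ} [Fintype (Box μ)] (c : Box μ) (r s : ℕ) :
    deficit μ (raise μ c r) s = if c.1.2 + 1 ≤ s ∧ s < c.1.2 + 1 + r then 1 else 0 := by
  classical
  unfold deficit
  split_ifs with h
  · rw [Finset.card_eq_one]
    refine ⟨c, ?_⟩
    ext b
    simp only [Finset.mem_filter, Finset.mem_univ, true_and, Finset.mem_singleton]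
    constructor
    · intro hb; by_contra hbc; rw [raise, if_neg hbc] at hb; omega
    · rintro rfl; simpa [raise] using h
  · rw [Finset.card_eq_zero, Finset.filter_eq_empty_iff]
    intro b _ hb
    unfold raise at hb
    split_ifs at hb with hbc
    · subst hbc; exact h hb
    · omega

theorem raise_injective {μ : ℕ → ℕ} (c : Box μ) : Function.Injective (raise μ c) := by
  intro r r' h
  have := congrFun h c
  simpa [raise] using this

/-- The staircase family at `c`: the least tableau with `0, 1, …, n - 1` added to its entry
in `c`. -/
def staircase (μ : ℕ → ℕ) (c : Box μ) (n : ℕ) : Finset (Box μ → ℕ) :=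
  (Finset.range n).map ⟨raise μ c, raise_injective c⟩

theorem card_staircase {μ : ℕ → ℕ} (c : Box μ) (n : ℕ) : (staircase μ c n).card = n := by
  rw [staircase, Finset.card_map, Finset.card_range]

theorem staircase_conjSemistandard {μ : ℕ → ℕ} (hμ : Antitone μ) {c : Box μ}
    (hc : IsOuterCorner μ c) (n : ℕ) : ∀ t ∈ staircase μ c n, ConjSemistandard μ t := by
  intro t ht
  obtain ⟨r, -, rfl⟩ := Finset.mem_map.mp ht
  exact raise_conjSemistandard hμ hc r

theorem sum_deficit_staircase {μ : ℕ → ℕ} [Fintype (Box μ)] (c : Box μ) (n s : ℕ) :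
    ∑ t ∈ staircase μ c n, deficit μ t s = if c.1.2 + 1 ≤ s then n - (s - c.1.2) else 0 := by
  rw [staircase, Finset.sum_map]
  simp only [Function.Embedding.coeFn_mk, deficit_raise]
  split_ifs with h
  · rw [← Finset.card_filter, ← Nat.card_Ico (s - c.1.2) n]
    congr 1
    ext r
    simp only [Finset.mem_filter, Finset.mem_range, Finset.mem_Ico]
    omega
  · simp [h]

/-- The tableau obtained from the least one by adding `1` to every entry. -/
def shiftT (μ : ℕ → ℕ) (b : Box μ) : ℕ := b.1.2 + 2

theorem shiftT_conjSemistandard (μ : ℕ → ℕ) : ConjSemistandard μ (shiftT μ) :=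
  ⟨fun b => by unfold shiftT; omega, fun i j j' h h' hj => by simp only [shiftT]; omega,
    fun i i' j h h' hi => le_rfl⟩

/-! ### Recognising tableaux by their deficits -/

theorem eq_raise_zero_of_deficit {μ : ℕ → ℕ} [Fintype (Box μ)] (c : Box μ) {t : Box μ → ℕ}
    (ht : ConjSemistandard μ t) (h : ∀ b : Box μ, deficit μ t (b.1.2 + 1) = 0) :
    t = raise μ c 0 := by
  funext b
  have h1 := le_of_conjSemistandard ht b
  have h2 := deficit_eq_zero.mp (h b) b le_rfl
  simp only [raise, add_zero, ite_self]
  omega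

/-- If only one entry in the last column exceeds its least possible value, then by weak increase
down the column it is the bottom entry. -/
theorem eq_raise_of_deficit {μ : ℕ → ℕ} (hμ : Antitone μ) [Fintype (Box μ)] {c : Box μ}
    (hc : IsOuterCorner μ c) (hlast : ∀ b : Box μ, b.1.2 ≤ c.1.2) {t : Box μ → ℕ}
    (ht : ConjSemistandard μ t) (h0 : ∀ s ≤ c.1.2, deficit μ t s = 0)
    (h1 : deficit μ t (c.1.2 + 1) ≤ 1) :
    t = raise μ c (t c - (c.1.2 + 1)) := by
  funext b
  have hb := le_of_conjSemistandard ht b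
  unfold raise
  split_ifs with hbc
  · subst hbc; omega
  · by_contra hne
    have hcol : b.1.2 = c.1.2 := by
      by_contra hcol
      have := hlast b
      have := deficit_eq_zero.mp (h0 (b.1.2 + 1) (by omega)) b le_rfl
      omega
    have hrow : b.1.1 < c.1.1 := by
      by_contra hrow
      rcases (not_lt.mp hrow).lt_or_eq with h | h
      · have h3 : μ b.1.1 ≤ μ (c.1.1 + 1) := hμ h
        have := b.2
        have := hc.2
        omega
      · exact hbc (Subtype.ext (Prod.ext h.symm hcol))
    have hle : t b ≤ t c := by
      obtain ⟨⟨i, j⟩, hb'⟩ := b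
      obtain ⟨⟨i', j'⟩, hc'⟩ := c
      simp only at hcol hrow
      subst hcol
      exact ht.2.2 i i' j hb' hc' hrow
    exact hbc (Finset.card_le_one.mp h1 b (by simp; omega) c (by simp; omega))

theorem exists_last_corner {μ : ℕ → ℕ} (hμ : Antitone μ) {k : ℕ} (hk : ∀ i, k ≤ i → μ i = 0)
    (h0 : 0 < μ 0) : ∃ c : Box μ, IsOuterCorner μ c ∧ c.1.2 + 1 = μ 0 := by
  have hex : ∃ i, μ i < μ 0 := ⟨k, by rw [hk k le_rfl]; exact h0⟩
  classical
  obtain ⟨i, hi⟩ : ∃ i, Nat.find hex = i + 1 := by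
    refine Nat.exists_eq_succ_of_ne_zero fun h => ?_
    have := Nat.find_spec hex
    rw [h] at this
    exact lt_irrefl _ this
  have h1 := Nat.find_spec hex
  have h2 : ¬ μ i < μ 0 := Nat.find_min hex (by omega)
  have h3 : μ i ≤ μ 0 := hμ (Nat.zero_le i)
  rw [hi] at h1
  refine ⟨⟨(i, μ 0 - 1), ?_⟩, ⟨?_, ?_⟩, ?_⟩ <;> simp only <;> omega

theorem finite_box {μ : ℕ → ℕ} (hμ : Antitone μ) {k : ℕ} (hk : ∀ i, k ≤ i → μ i = 0) :
    Finite (Box μ) := by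
  refine Set.Finite.subset (Set.toFinite (Set.Iio k ×ˢ Set.Iio (μ 0))) ?_
  rintro ⟨i, j⟩ hb
  have hb' : j < μ i := hb
  have := hμ (Nat.zero_le i)
  refine ⟨?_, ?_⟩
  · by_contra h
    have := hk i (by simpa using h)
    omega
  · simp only [Set.mem_Iio]; omega

theorem card_box {μ : ℕ → ℕ} {k : ℕ} (hk : ∀ i, k ≤ i → μ i = 0) [Fintype (Box μ)] :
    Fintype.card (Box μ) = ∑ i ∈ Finset.range k, μ i := by
  classical
  rw [← Finset.card_univ,
    Finset.card_eq_sum_card_fiberwise (f := fun b : Box μ => b.1.1) (t := Finset.range k)]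
  · refine Finset.sum_congr rfl fun i _ => ?_
    rw [← Finset.card_range (μ i)]
    symm
    refine Finset.card_bij (fun j hj => ⟨(i, j), Finset.mem_range.mp hj⟩) ?_ ?_ ?_
    · intro j hj; simp
    · intro j _ j' _ h; simpa [Subtype.ext_iff] using h
    · rintro ⟨⟨i', j⟩, hb⟩ h
      simp only [Finset.mem_filter, Finset.mem_univ, true_and] at h
      subst h
      exact ⟨j, Finset.mem_range.mpr hb, rfl⟩
  · intro b _
    simp only [Finset.coe_range, Set.mem_Iio]
    by_contra h
    have := hk b.1.1 (by omega)
    have := b.2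
    omega

/-! ### The three exceptional cases -/

/-- The staircase at `c` has the least total deficit as soon as, for every `s` not less than the
number of columns, each family of `n` tableaux has few enough members with deficit zero at `s`. -/
theorem staircase_dominant {μ : ℕ → ℕ} (hμ : Antitone μ) {k : ℕ} (hk : ∀ i, k ≤ i → μ i = 0)
    [Fintype (Box μ)] {c : Box μ} (hc : IsOuterCorner μ c) {n : ℕ}
    (hZ : ∀ S : Finset (Box μ → ℕ), S.card = n → (∀ t ∈ S, ConjSemistandard μ t) →
      ∀ s, c.1.2 + 1 ≤ s → s - c.1.2 < n →
        (S.filter fun t => deficit μ t s = 0).card ≤ s - c.1.2) :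
    ∃ T : Finset (Box μ → ℕ), T.card = n ∧ (∀ t ∈ T, ConjSemistandard μ t) ∧
      ∀ S : Finset (Box μ → ℕ), S.card = n → (∀ t ∈ S, ConjSemistandard μ t) →
        DomLE (familyWeight μ k S) (familyWeight μ k T) := by
  have hT := staircase_conjSemistandard hμ hc n
  refine ⟨staircase μ c n, card_staircase c n, hT, fun S hS hS' => ?_⟩
  rw [domLE_iff_deficit hk hS' hT (by rw [hS, card_staircase])]
  intro s
  rw [sum_deficit_staircase]
  split_ifs with h
  · by_cases hn : s - c.1.2 < n
    · have h1 := hZ S hS hS' s h hn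
      have h2 := card_le_card_filter_add_sum S fun t => deficit μ t s
      omega
    · omega
  · exact Nat.zero_le _

/-- On a diagram with a single box, tableaux with deficit zero at `s` correspond to entries in
`{1, …, s}`. -/
theorem card_zero_le_of_card_box {μ : ℕ → ℕ} [Fintype (Box μ)] (h1 : Fintype.card (Box μ) = 1)
    (c : Box μ) (S : Finset (Box μ → ℕ)) (hS : ∀ t ∈ S, ConjSemistandard μ t) (s : ℕ)
    (hs : c.1.2 + 1 ≤ s) :
    (S.filter fun t => deficit μ t s = 0).card ≤ s - c.1.2 := by
  have hsub : ∀ b : Box μ, b = c := fun b =>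
    (Fintype.card_le_one_iff.mp h1.le) b c
  have : (S.filter fun t => deficit μ t s = 0).card ≤ (Finset.Icc (c.1.2 + 1) s).card := by
    refine Finset.card_le_card_of_injOn (fun t => t c) ?_ ?_
    · intro t ht
      simp only [Finset.coe_filter, Set.mem_ofPred_eq] at ht
      simp only [Finset.coe_Icc, Set.mem_Icc]
      exact ⟨le_of_conjSemistandard (hS t ht.1) c, deficit_eq_zero.mp ht.2 c hs⟩
    · intro t _ t' _ h
      funext b
      rw [hsub b]
      exact h
  rw [Nat.card_Icc] at this
  omega

/-- For a rectangle with `a` columns, every row of a tableau with deficit zero at `a` is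
`1, …, a`. -/
theorem card_zero_le_of_rect {μ : ℕ → ℕ} [Fintype (Box μ)] (c : Box μ)
    (hrect : ∀ b : Box μ, μ b.1.1 = c.1.2 + 1)
    (S : Finset (Box μ → ℕ)) (hS : ∀ t ∈ S, ConjSemistandard μ t) :
    (S.filter fun t => deficit μ t (c.1.2 + 1) = 0).card ≤ 1 := by
  rw [Finset.card_le_one]
  suffices h : ∀ t ∈ S.filter (fun t => deficit μ t (c.1.2 + 1) = 0), ∀ b, t b = b.1.2 + 1 by
    intro t ht t' ht'
    funext b
    rw [h t ht b, h t' ht' b]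
  intro t ht b
  rw [Finset.mem_filter] at ht
  have hcss := hS t ht.1
  -- Entries right of `(i, j)` increase strictly up to the last one, which is at most `a`.
  have key : ∀ d i j (h : j < μ i), j + d = c.1.2 → t ⟨(i, j), h⟩ ≤ j + 1 := by
    intro d
    induction d with
    | zero =>
      intro i j h hj
      have := deficit_eq_zero.mp ht.2 ⟨(i, j), h⟩ (by simp only; omega)
      omega
    | succ d ih =>
      intro i j h hj
      have hi : μ i = c.1.2 + 1 := hrect ⟨(i, j), h⟩
      have h' : j + 1 < μ i := by omega
      have h1 := ih i (j + 1) h' (by omega)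
      have h2 := hcss.2.1 i j (j + 1) h h' (by omega)
      omega
  have h1 := le_of_conjSemistandard hcss b
  have h2 := hrect b
  have h3 := key (c.1.2 - b.1.2) b.1.1 b.1.2 b.2 (by have := b.2; omega)
  exact le_antisymm h3 h1

/-! ### Non-existence in the remaining cases -/

theorem not_dominant_of_not_rect {μ : ℕ → ℕ} (hμ : Antitone μ) {k : ℕ}
    (hk : ∀ i, k ≤ i → μ i = 0) [Fintype (Box μ)] {c c' : Box μ} (hc : IsOuterCorner μ c)
    (hc' : IsOuterCorner μ c') (hlt : c'.1.2 < c.1.2) (T : Finset (Box μ → ℕ)) (hT : T.card = 2)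
    (hT' : ∀ t ∈ T, ConjSemistandard μ t)
    (hdom : ∀ S : Finset (Box μ → ℕ), S.card = 2 → (∀ t ∈ S, ConjSemistandard μ t) →
        DomLE (familyWeight μ k S) (familyWeight μ k T)) : False := by
  have key : ∀ {c : Box μ}, IsOuterCorner μ c → ∀ s,
      ∑ t ∈ T, deficit μ t s ≤ if c.1.2 + 1 ≤ s then 2 - (s - c.1.2) else 0 := by
    intro c hc s
    have hS := staircase_conjSemistandard hμ hc 2
    rw [← sum_deficit_staircase]
    exact (domLE_iff_deficit hk hS hT' (by rw [hT, card_staircase])).mp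
      (hdom _ (card_staircase c 2) hS) s
  have hzero : ∀ s, ∑ t ∈ T, deficit μ t s = 0 := by
    intro s
    have h1 := key hc s
    have h2 := key hc' s
    split_ifs at h1 h2 <;> omega
  have hle : T.card ≤ 1 := by
    have h : ∀ t ∈ T, t = raise μ c 0 := fun t ht =>
      eq_raise_zero_of_deficit c (hT' t ht) fun b =>
        (Finset.sum_eq_zero_iff.mp (hzero _)) t ht
    rw [Finset.card_le_one]
    intro t ht t' ht'
    rw [h t ht, h t' ht']
  omega

theorem not_dominant_of_three_le {μ : ℕ → ℕ} (hμ : Antitone μ) {k : ℕ}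
    (hk : ∀ i, k ≤ i → μ i = 0) [Fintype (Box μ)] {c : Box μ} (hc : IsOuterCorner μ c)
    (hlast : ∀ b : Box μ, b.1.2 ≤ c.1.2) (hm : 1 < Fintype.card (Box μ)) {n : ℕ} (hn : 3 ≤ n)
    (T : Finset (Box μ → ℕ)) (hT : T.card = n) (hT' : ∀ t ∈ T, ConjSemistandard μ t)
    (hdom : ∀ S : Finset (Box μ → ℕ), S.card = n → (∀ t ∈ S, ConjSemistandard μ t) →
        DomLE (familyWeight μ k S) (familyWeight μ k T)) : False := by
  classical
  have hS1 := staircase_conjSemistandard hμ hc n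
  have h1 := (domLE_iff_deficit hk hS1 hT' (by rw [hT, card_staircase])).mp
    (hdom _ (card_staircase c n) hS1)
  simp only [sum_deficit_staircase] at h1
  have hlow : ∀ t ∈ T, ∀ s ≤ c.1.2, deficit μ t s = 0 := by
    intro t ht s hs
    have h := h1 s
    rw [if_neg (by omega)] at h
    exact (Finset.sum_eq_zero_iff.mp (Nat.le_zero.mp h)) t ht
  have hmid : ∑ t ∈ T, deficit μ t (c.1.2 + 1) ≤ n - 1 := by
    have h := h1 (c.1.2 + 1)
    rwa [if_pos le_rfl, Nat.add_sub_cancel_left] at h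
  -- The shifted tableau differs from the least one in every box, hence in a box other than `c`.
  have hnotin : shiftT μ ∉ staircase μ c (n - 1) := by
    intro h
    obtain ⟨r, -, hr⟩ := Finset.mem_map.mp h
    obtain ⟨b, hb⟩ := Fintype.exists_ne_of_one_lt_card hm c
    have := congrFun hr b
    simp [raise, shiftT, hb] at this
  have hS2card : (insert (shiftT μ) (staircase μ c (n - 1))).card = n := by
    rw [Finset.card_insert_of_notMem hnotin, card_staircase]
    omega
  have hS2 : ∀ t ∈ insert (shiftT μ) (staircase μ c (n - 1)), ConjSemistandard μ t := by
    intro t ht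
    rcases Finset.mem_insert.mp ht with rfl | ht
    · exact shiftT_conjSemistandard μ
    · exact staircase_conjSemistandard hμ hc _ t ht
  have hhigh : ∑ t ∈ T, deficit μ t (c.1.2 + 2) ≤ n - 3 := by
    have h := (domLE_iff_deficit hk hS2 hT' (by rw [hT, hS2card])).mp (hdom _ hS2card hS2)
      (c.1.2 + 2)
    have hz : deficit μ (shiftT μ) (c.1.2 + 2) = 0 :=
      deficit_eq_zero.mpr fun b _ => by have := hlast b; unfold shiftT; omega
    rw [Finset.sum_insert hnotin, hz, sum_deficit_staircase, if_pos (by omega)] at h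
    omega
  -- Every member other than the least tableau has positive deficit at the last column. There are
  -- at least `n - 1` of these, and the total deficit is at most `n - 1`, so each deficit is at
  -- most one.
  have hone : ∀ t ∈ T, deficit μ t (c.1.2 + 1) ≤ 1 := by
    intro w hw
    have hz : ((T.erase w).filter fun t => deficit μ t (c.1.2 + 1) = 0).card ≤ 1 := by
      have h : ∀ t ∈ (T.erase w).filter (fun t => deficit μ t (c.1.2 + 1) = 0),
          t = raise μ c 0 := by
        intro t ht
        rw [Finset.mem_filter] at ht
        have htT := Finset.mem_of_mem_erase ht.1
        refine eq_raise_zero_of_deficit c (hT' t htT) fun b => ?_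
        rcases (hlast b).lt_or_eq with h | h
        · exact hlow t htT _ h
        · rw [h]; exact ht.2
      rw [Finset.card_le_one]
      intro t ht t' ht'
      rw [h t ht, h t' ht']
    have h2 := card_le_card_filter_add_sum (T.erase w) fun t => deficit μ t (c.1.2 + 1)
    have h3 := Finset.add_sum_erase T (fun t => deficit μ t (c.1.2 + 1)) hw
    have h4 := Finset.card_erase_of_mem hw
    omega
  have htwo : (T.filter fun t => deficit μ t (c.1.2 + 2) = 0).card ≤ 2 := by
    have hsub : (T.filter fun t => deficit μ t (c.1.2 + 2) = 0) ⊆ staircase μ c 2 := by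
      intro t ht
      rw [Finset.mem_filter] at ht
      have hle := deficit_eq_zero.mp ht.2 c (by omega)
      refine Finset.mem_map.mpr ⟨t c - (c.1.2 + 1), ?_, ?_⟩
      · rw [Finset.mem_range]; omega
      · exact (eq_raise_of_deficit hμ hc hlast (hT' t ht.1) (hlow t ht.1) (hone t ht.1)).symm
    simpa [card_staircase] using Finset.card_le_card hsub
  have h5 := card_le_card_filter_add_sum T fun t => deficit μ t (c.1.2 + 2)
  omega

/-- **Proposition 8.7 (Paget–Wildon).** Let `μ` be a partition of `m ≥ 1` and let `n ≥ 1`.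
There is a conjugate-semistandard tableau family of shape `μ^n` whose weight dominates the
weight of every conjugate-semistandard tableau family of shape `μ^n` if and only if `m = 1`,
or `n = 1`, or `μ` is rectangular and `n = 2`. -/
theorem unique_maximal_weight_iff
    (μ : ℕ → ℕ) (hμ : ∀ i, μ (i + 1) ≤ μ i)
    (m k : ℕ) (hm1 : 1 ≤ m) (hmsum : m = ∑ i ∈ Finset.range k, μ i)
    (hkpos : ∀ i, i < k → 0 < μ i) (hk : ∀ i, k ≤ i → μ i = 0)
    (n : ℕ) (hn1 : 1 ≤ n) :
    (∃ T : Finset (Box μ → ℕ), T.card = n ∧ (∀ t ∈ T, ConjSemistandard μ t) ∧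
      ∀ S : Finset (Box μ → ℕ), S.card = n → (∀ t ∈ S, ConjSemistandard μ t) →
        DomLE (familyWeight μ k S) (familyWeight μ k T)) ↔
    (m = 1 ∨ n = 1 ∨ ((∀ i, i < k → μ i = μ 0) ∧ n = 2)) := by
  have hanti : Antitone μ := antitone_nat_of_succ_le hμ
  have hk0 : 0 < k := by
    rcases Nat.eq_zero_or_pos k with rfl | h
    · simp at hmsum; omega
    · exact h
  have : Finite (Box μ) := finite_box hanti hk
  let _ : Fintype (Box μ) := Fintype.ofFinite _
  have hcard : Fintype.card (Box μ) = m := by rw [card_box hk, hmsum]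
  obtain ⟨c, hc, hca⟩ := exists_last_corner hanti hk (hkpos 0 hk0)
  have hlast : ∀ b : Box μ, b.1.2 ≤ c.1.2 := by
    intro b
    have h1 := b.2
    have h2 : μ b.1.1 ≤ μ 0 := hanti (Nat.zero_le _)
    omega
  constructor
  · rintro ⟨T, hT, hT', hdom⟩
    by_contra! hcon
    obtain ⟨hm, hn, hrect⟩ := hcon
    by_cases h3 : 3 ≤ n
    · exact not_dominant_of_three_le hanti hk hc hlast (by omega) h3 T hT hT' hdom
    · obtain rfl : n = 2 := by omega
      obtain ⟨i, hi, hne⟩ : ∃ i, i < k ∧ μ i ≠ μ 0 := by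
        by_contra! h
        exact hrect h rfl
      -- The end of the last row is a corner, in a column before the last one.
      have h1 : μ (k - 1) ≤ μ i := hanti (by omega)
      have h2 : μ i ≤ μ 0 := hanti (Nat.zero_le i)
      have h4 := hkpos (k - 1) (by omega)
      have h5 := hk (k - 1 + 1) (by omega)
      refine not_dominant_of_not_rect hanti hk hc
        (c' := ⟨(k - 1, μ (k - 1) - 1), by simp only; omega⟩) ⟨?_, ?_⟩ ?_ T hT hT' hdom
      · simp only; omega
      · simp only; omega
      · simp only; omega
  · intro h
    refine staircase_dominant hanti hk hc fun S hS hS' s hs hsn => ?_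
    rcases h with rfl | rfl | ⟨hrect, rfl⟩
    · exact card_zero_le_of_card_box hcard c S hS' s hs
    · omega
    · obtain rfl : s = c.1.2 + 1 := by omega
      rw [Nat.add_sub_cancel_left]
      refine card_zero_le_of_rect c (fun b => ?_) S hS'
      rw [hca]
      refine hrect _ ?_
      by_contra hb
      have h1 := hk b.1.1 (by omega)
      have h2 := b.2
      omega
end

section
/- Let m ≥ 2 and let μ = (m−1, 1). For every n ≥ 1, the number of conjugate-semistandard tableau families of shape μ^n whose weight is weakly decreasing and whose type is lexicographically minimal among the types of all conjugate-semistandard tableau families of shape μ^n with weakly decreasing weight equals the binomial coefficient C(m−1, e) for some e ∈ {1, …, m−1}. Moreover, for every e ∈ {1,…,m−1} there exists n ≥ 1 for which this number equals C(m−1, e). -/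
/-- The hook partition `μ = (m−1, 1)`, as a 0-indexed function. -/
def hookMu (m : ℕ) : ℕ → ℕ := fun i => if i = 0 then m - 1 else if i = 1 then 1 else 0

/-- `T` is a conjugate-semistandard tableau family of shape `(m−1,1)^n` with weakly decreasing
weight whose type is lexicographically minimal among the types of all such families. -/
def IsLexMinimalTypeFamily (m n : ℕ) (T : Finset (Box (hookMu m) → ℕ)) : Prop :=
  T.card = n ∧ (∀ t ∈ T, ConjSemistandard (hookMu m) t) ∧
  WeaklyDecr (familyWeight (hookMu m) 2 T) ∧
  ∀ S : Finset (Box (hookMu m) → ℕ), S.card = n →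
    (∀ t ∈ S, ConjSemistandard (hookMu m) t) →
    WeaklyDecr (familyWeight (hookMu m) 2 S) →
    LexLE (conjOf (familyWeight (hookMu m) 2 T) (m * n))
      (conjOf (familyWeight (hookMu m) 2 S) (m * n))


/-! ### The `n` smallest elements of a keyed set -/

/-- `T` is a set of `P`-elements that is initial up to `v` for the preorder induced by `key`: it
contains every `P`-element with key below `v` and none with key above `v`. Among elements with
key exactly `v` the choice is free. -/
def IsInitial {X K : Type*} [LinearOrder K] (P : X → Prop) (key : X → K) (v : K)
    (T : Finset X) : Prop :=
  (∀ y ∈ T, P y) ∧ (∀ y, P y → key y < v → y ∈ T) ∧ ∀ y ∈ T, key y ≤ v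

section Greedy

variable {X K : Type*} [AddCommMonoid K] [LinearOrder K] [IsOrderedCancelAddMonoid K]
  {P : X → Prop} {key : X → K} {v : K}

/-- An initial set minimises the key sum among sets of its size, and every minimiser is initial. -/
theorem IsInitial.sum_le {T S : Finset X} (hT : IsInitial P key v T) (hS : ∀ y ∈ S, P y)
    (hc : S.card = T.card) :
    ∑ t ∈ T, key t ≤ ∑ t ∈ S, key t ∧
      (∑ t ∈ T, key t = ∑ t ∈ S, key t → IsInitial P key v S) := by
  classical
  obtain ⟨hTP, hTlow, hTv⟩ := hT
  have hcard : (T \ S).card = (S \ T).card := Finset.card_sdiff_comm hc.symm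
  have h1 : ∀ y ∈ T \ S, key y ≤ v := fun y hy => hTv y (Finset.mem_sdiff.mp hy).1
  have h2 : ∀ y ∈ S \ T, v ≤ key y := fun y hy => by
    by_contra hlt
    exact (Finset.mem_sdiff.mp hy).2 (hTlow y (hS y (Finset.mem_sdiff.mp hy).1) (not_le.mp hlt))
  have e1 : ∑ t ∈ T, key t = ∑ t ∈ T ∩ S, key t + ∑ t ∈ T \ S, key t :=
    (Finset.sum_inter_add_sum_sdiff T S key).symm
  have e2 : ∑ t ∈ S, key t = ∑ t ∈ T ∩ S, key t + ∑ t ∈ S \ T, key t := by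
    rw [Finset.inter_comm]; exact (Finset.sum_inter_add_sum_sdiff S T key).symm
  have l1 : ∑ t ∈ T \ S, key t ≤ ∑ _t ∈ T \ S, v := Finset.sum_le_sum h1
  have l2 : ∑ _t ∈ S \ T, v ≤ ∑ t ∈ S \ T, key t := Finset.sum_le_sum h2
  have l3 : ∑ _t ∈ T \ S, v = ∑ _t ∈ S \ T, v := by simp [hcard]
  refine ⟨?_, fun heq => ?_⟩
  · rw [e1, e2]
    exact add_le_add_right (l1.trans (l3.le.trans l2)) _
  · have h3 : ∑ t ∈ T \ S, key t = ∑ t ∈ S \ T, key t := by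
      rw [e1, e2] at heq
      exact add_left_cancel heq
    have f1 : ∑ t ∈ T \ S, key t = ∑ _t ∈ T \ S, v :=
      le_antisymm l1 (l3.le.trans (l2.trans h3.ge))
    have f2 : ∑ _t ∈ S \ T, v = ∑ t ∈ S \ T, key t :=
      le_antisymm l2 (h3.ge.trans (l1.trans l3.le))
    have g1 := (Finset.sum_eq_sum_iff_of_le h1).mp f1
    have g2 := (Finset.sum_eq_sum_iff_of_le h2).mp f2
    refine ⟨hS, fun y hy hlt => ?_, fun y hy => ?_⟩
    · by_contra hyS
      exact hlt.ne (g1 y (Finset.mem_sdiff.mpr ⟨hTlow y hy hlt, hyS⟩))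
    · by_cases hyT : y ∈ T
      · exact hTv y hyT
      · exact (g2 y (Finset.mem_sdiff.mpr ⟨hy, hyT⟩)).ge

end Greedy

section Count

variable {X K : Type*} [LinearOrder K] {P : X → Prop} {key : X → K} {v : K}

theorem IsInitial.union [DecidableEq X] {L C D : Finset X} (hL : ∀ y, y ∈ L ↔ P y ∧ key y < v)
    (hC : ∀ y, y ∈ C ↔ P y ∧ key y = v) (hD : D ⊆ C) : IsInitial P key v (L ∪ D) := by
  refine ⟨fun y hy => ?_, fun y hy hlt => Finset.mem_union_left _ ((hL y).2 ⟨hy, hlt⟩),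
    fun y hy => ?_⟩ <;> rcases Finset.mem_union.mp hy with h | h
  · exact ((hL y).1 h).1
  · exact ((hC y).1 (hD h)).1
  · exact ((hL y).1 h).2.le
  · exact ((hC y).1 (hD h)).2.le

theorem disjoint_below_class {L C : Finset X} (hL : ∀ y, y ∈ L ↔ P y ∧ key y < v)
    (hC : ∀ y, y ∈ C ↔ P y ∧ key y = v) : Disjoint L C := by
  rw [Finset.disjoint_left]
  intro y h1 h2
  exact (((hL y).1 h1).2).ne ((hC y).1 h2).2

/-- An initial set is determined by which elements of the top class it uses. -/
theorem ncard_isInitial {L C : Finset X} (hL : ∀ y, y ∈ L ↔ P y ∧ key y < v)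
    (hC : ∀ y, y ∈ C ↔ P y ∧ key y = v) (e : ℕ) :
    {T : Finset X | T.card = L.card + e ∧ IsInitial P key v T}.ncard = C.card.choose e := by
  classical
  have hLC := disjoint_below_class hL hC
  have hset : {T : Finset X | T.card = L.card + e ∧ IsInitial P key v T} =
      ↑((C.powersetCard e).image (fun D => L ∪ D)) := by
    ext T
    simp only [Set.mem_ofPred_eq, Finset.coe_image, Set.mem_image, Finset.mem_coe,
      Finset.mem_powersetCard]
    constructor
    · rintro ⟨hc, hP, hlow, hle⟩
      have hLT : L ⊆ T := fun y hy => hlow y ((hL y).1 hy).1 ((hL y).1 hy).2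
      refine ⟨T \ L, ⟨fun y hy => ?_, ?_⟩, Finset.union_sdiff_of_subset hLT⟩
      · obtain ⟨h1, h2⟩ := Finset.mem_sdiff.mp hy
        refine (hC y).2 ⟨hP y h1, le_antisymm (hle y h1) (not_lt.mp fun hlt => h2 ?_)⟩
        exact (hL y).2 ⟨hP y h1, hlt⟩
      · rw [Finset.card_sdiff_of_subset hLT]; omega
    · rintro ⟨D, ⟨hD, hDc⟩, rfl⟩
      refine ⟨?_, IsInitial.union hL hC hD⟩
      rw [Finset.card_union_of_disjoint (hLC.mono_right hD), hDc]
  rw [hset, Set.ncard_coe_finset, Finset.card_image_of_injOn, Finset.card_powersetCard]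
  intro D hD E hE h
  have hD' : D ⊆ C := (Finset.mem_powersetCard.mp hD).1
  have hE' : E ⊆ C := (Finset.mem_powersetCard.mp hE).1
  have h' : L ∪ D = L ∪ E := h
  rw [← Finset.union_sdiff_cancel_left (hLC.mono_right hD'), h',
    Finset.union_sdiff_cancel_left (hLC.mono_right hE')]

/-- If initial segments are finite and there are arbitrarily many elements, then every `n ≥ 1`
lands strictly above the elements below some `x`, and at most at the end of the class of `x`. -/
theorem exists_threshold (hfin : ∀ x, P x → {y | P y ∧ key y ≤ key x}.Finite)
    (hinf : ∀ n : ℕ, ∃ S : Finset X, S.card = n ∧ ∀ y ∈ S, P y) (n : ℕ) (hn : 1 ≤ n) :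
    ∃ x, P x ∧ ∃ L C : Finset X, (∀ y, y ∈ L ↔ P y ∧ key y < key x) ∧
      (∀ y, y ∈ C ↔ P y ∧ key y = key x) ∧ L.card < n ∧ n ≤ L.card + C.card := by
  classical
  let R : X → ℕ := fun x => {y | P y ∧ key y ≤ key x}.ncard
  obtain ⟨S, hSc, hSP⟩ := hinf n
  have hSne : S.Nonempty := Finset.card_pos.mp (by omega)
  obtain ⟨z, hzS, hz⟩ := S.exists_max_image key hSne
  have hRz : n ≤ R z := by
    rw [← hSc, ← Set.ncard_coe_finset]
    exact Set.ncard_le_ncard (fun y hy => ⟨hSP y hy, hz y hy⟩) (hfin z (hSP z hzS))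
  let Q := (hfin z (hSP z hzS)).toFinset.filter fun y => n ≤ R y
  have hzQ : z ∈ Q := by simp [Q, hRz, hSP z hzS]
  obtain ⟨x, hxQ, hx⟩ := Q.exists_min_image key ⟨z, hzQ⟩
  have hxP : P x ∧ key x ≤ key z ∧ n ≤ R x := by simpa [Q, and_assoc] using hxQ
  have hF := hfin x hxP.1
  let L := hF.toFinset.filter fun y => key y < key x
  let C := hF.toFinset.filter fun y => key y = key x
  have hL : ∀ y, y ∈ L ↔ P y ∧ key y < key x := fun y => by
    simp only [L, Finset.mem_filter, Set.Finite.mem_toFinset, Set.mem_ofPred_eq]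
    exact ⟨fun h => ⟨h.1.1, h.2⟩, fun h => ⟨⟨h.1, h.2.le⟩, h.2⟩⟩
  have hC : ∀ y, y ∈ C ↔ P y ∧ key y = key x := fun y => by
    simp only [C, Finset.mem_filter, Set.Finite.mem_toFinset, Set.mem_ofPred_eq]
    exact ⟨fun h => ⟨h.1.1, h.2⟩, fun h => ⟨⟨h.1, h.2.le⟩, h.2⟩⟩
  refine ⟨x, hxP.1, L, C, hL, hC, ?_, ?_⟩
  · by_contra! hle
    obtain ⟨y, hyL, hy⟩ := L.exists_max_image key (Finset.card_pos.mp (by omega))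
    have hy' := (hL y).1 hyL
    have hRy : n ≤ R y := by
      refine hle.trans ?_
      rw [← Set.ncard_coe_finset]
      exact Set.ncard_le_ncard (fun a ha => ⟨((hL a).1 ha).1, hy a ha⟩) (hfin y hy'.1)
    have hyQ : y ∈ Q := by
      simp only [Q, Finset.mem_filter, Set.Finite.mem_toFinset, Set.mem_ofPred_eq]
      exact ⟨⟨hy'.1, hy'.2.le.trans hxP.2.1⟩, hRy⟩
    exact absurd (hx y hyQ) (not_le.mpr hy'.2)
  · rw [← Finset.card_union_of_disjoint (disjoint_below_class hL hC)]
    refine hxP.2.2.trans ?_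
    rw [← Set.ncard_coe_finset]
    refine Set.ncard_le_ncard (fun a ha => ?_) (Finset.finite_toSet _)
    rw [Finset.mem_coe, Finset.mem_union, hL, hC]
    rcases ha.2.lt_or_eq with h | h
    · exact Or.inl ⟨ha.1, h⟩
    · exact Or.inr ⟨ha.1, h⟩

end Count

/-! ### Lexicographic order on types versus colexicographic order on weights -/

theorem LexLT.not_lexLE {f g : ℕ → ℕ} (h : LexLT f g) : ¬ LexLE g f := by
  obtain ⟨j, hj, hpre, hlt⟩ := h
  rintro (he | ⟨i, hi, hpre', hlt'⟩)
  · have := he j hj; omega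
  · rcases lt_trichotomy i j with h | h | h
    · have := hpre i hi h; omega
    · subst h; omega
    · have := hpre' j hj h; omega

theorem WeaklyDecr.antitone {w : ℕ → ℕ} (h : WeaklyDecr w) {i j : ℕ} (hi : 1 ≤ i) (hij : i ≤ j) :
    w j ≤ w i := by
  induction j, hij using Nat.le_induction with
  | base => exact le_rfl
  | succ k hk ih => exact (h k (hi.trans hk)).trans ih

/-- Conjugation turns colexicographic comparison of weights into lexicographic comparison of
types. The types first differ at index `w j + 1`, where `j` is the last index at which the
weights differ. -/
theorem lexLT_conjOf {w w' : ℕ → ℕ} {N j : ℕ} (hw : WeaklyDecr w) (hw' : WeaklyDecr w')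
    (hj : 1 ≤ j) (hjN : j ≤ N) (hagree : ∀ i, j < i → w i = w' i) (hlt : w j < w' j) :
    LexLT (conjOf w N) (conjOf w' N) := by
  refine ⟨w j + 1, by omega, fun i _ hi => ?_, ?_⟩
  · unfold conjOf
    congr 1
    refine Finset.filter_congr fun k hk => ?_
    have hk1 := (Finset.mem_Icc.mp hk).1
    rcases le_or_gt k j with h | h
    · have := hw.antitone hk1 h
      have := hw'.antitone hk1 h
      constructor <;> intro <;> omega
    · rw [hagree k h]
  · unfold conjOf
    refine Finset.card_lt_card ⟨fun k hk => ?_, fun hsub => ?_⟩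
    · rw [Finset.mem_filter, Finset.mem_Icc] at hk ⊢
      refine ⟨hk.1, ?_⟩
      rcases le_or_gt k j with h | h
      · have := hw'.antitone hk.1.1 h
        omega
      · rw [← hagree k h]; exact hk.2
    · have hmem : j ∈ (Finset.Icc 1 N).filter fun k => w j + 1 ≤ w' k := by
        rw [Finset.mem_filter, Finset.mem_Icc]
        exact ⟨⟨hj, hjN⟩, hlt⟩
      have := (Finset.mem_filter.mp (hsub hmem)).2
      omega

/-! ### Hook tableaux as pairs (arm, leg) -/

/-- The set of entries in the first row of a hook tableau. -/
def arm (m : ℕ) (t : Box (hookMu m) → ℕ) : Finset ℕ := (rowM (hookMu m) t 0).toFinset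

/-- The entry of a hook tableau in the unique box of the second row. -/
def leg (m : ℕ) (t : Box (hookMu m) → ℕ) : ℕ := t ⟨(1, 0), by simp [hookMu]⟩

/-- The weight of a single hook tableau as a finitely supported function. -/
noncomputable def tabWeight (m : ℕ) (t : Box (hookMu m) → ℕ) : ℕ →₀ ℕ :=
  Multiset.toFinsupp (rowM (hookMu m) t 0 + rowM (hookMu m) t 1)

/-- The weight of a tableau in colexicographic order, where the largest entry matters most. -/
noncomputable def tabKey (m : ℕ) (t : Box (hookMu m) → ℕ) : Colex (ℕ →₀ ℕ) := toColex (tabWeight m t)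

section Hook

variable {m : ℕ} {t t' : Box (hookMu m) → ℕ}

theorem mem_arm {a : ℕ} : a ∈ arm m t ↔ ∃ (j : ℕ) (h : j < hookMu m 0), t ⟨(0, j), h⟩ = a := by
  rw [arm, Multiset.mem_toFinset, rowM, Multiset.mem_map]
  constructor
  · rintro ⟨⟨j, hj⟩, -, h⟩
    exact ⟨j, Finset.mem_range.mp hj, h⟩
  · rintro ⟨j, hj, h⟩
    exact ⟨⟨j, Finset.mem_range.mpr hj⟩, Finset.mem_val.mpr (Finset.mem_attach _ _), h⟩

theorem rowM_one : rowM (hookMu m) t 1 = {leg m t} := by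
  rfl

theorem nodup_row_zero (h : ConjSemistandard (hookMu m) t) : (rowM (hookMu m) t 0).Nodup := by
  refine Multiset.Nodup.map_on ?_ (Finset.range _).attach.nodup
  rintro ⟨i, hi⟩ - ⟨j, hj⟩ - hij
  have hi' := Finset.mem_range.mp hi
  have hj' := Finset.mem_range.mp hj
  rcases lt_trichotomy i j with hlt | heq | hlt
  · exact absurd hij (h.2.1 0 i j hi' hj' hlt).ne
  · exact Subtype.ext heq
  · exact absurd hij (h.2.1 0 j i hj' hi' hlt).ne'

theorem tabWeight_apply (h : ConjSemistandard (hookMu m) t) (j : ℕ) :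
    tabWeight m t j = (if j ∈ arm m t then 1 else 0) + if j = leg m t then 1 else 0 := by
  rw [tabWeight, Multiset.toFinsupp_apply, Multiset.count_add, rowM_one, Multiset.count_singleton]
  congr 1
  rw [Multiset.count_eq_of_nodup (nodup_row_zero h)]
  simp [arm]

theorem card_arm (h : ConjSemistandard (hookMu m) t) : (arm m t).card = m - 1 := by
  rw [arm, Multiset.toFinset_card_of_nodup (nodup_row_zero h)]
  rw [rowM, Multiset.card_map]
  exact (Finset.card_attach).trans (by simp [hookMu])

theorem arm_pos (h : ConjSemistandard (hookMu m) t) {a : ℕ} (ha : a ∈ arm m t) : 1 ≤ a := by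
  obtain ⟨j, hj, rfl⟩ := mem_arm.mp ha
  exact h.1 _

theorem leg_pos (h : ConjSemistandard (hookMu m) t) : 1 ≤ leg m t := h.1 _

theorem exists_arm_le_leg (hm : 2 ≤ m) (h : ConjSemistandard (hookMu m) t) :
    ∃ a ∈ arm m t, a ≤ leg m t := by
  have h0 : 0 < hookMu m 0 := by simp [hookMu]; omega
  exact ⟨t ⟨(0, 0), h0⟩, mem_arm.mpr ⟨0, h0, rfl⟩, h.2.2 0 1 0 h0 _ one_pos⟩

/-- A conjugate-semistandard hook tableau is determined by its arm and its leg. -/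
theorem ext_arm_leg (h : ConjSemistandard (hookMu m) t) (h' : ConjSemistandard (hookMu m) t')
    (ha : arm m t = arm m t') (hl : leg m t = leg m t') : t = t' := by
  funext ⟨⟨i, j⟩, hb⟩
  have key : ∀ {s : Box (hookMu m) → ℕ} (hs : ConjSemistandard (hookMu m) s),
      (fun k : Fin (hookMu m 0) => s ⟨(0, k.1), k.2⟩) =
        (arm m s).orderEmbOfFin (by rw [card_arm hs]; simp [hookMu]) := by
    intro s hs
    refine Finset.orderEmbOfFin_unique _ (fun k => mem_arm.mpr ⟨k.1, k.2, rfl⟩) ?_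
    intro k l hkl
    exact hs.2.1 0 k.1 l.1 k.2 l.2 hkl
  match i, hb with
  | 0, hb =>
    have e1 := congrFun (key h) ⟨j, hb⟩
    have e2 := congrFun (key h') ⟨j, hb⟩
    simp only [ha] at e1
    exact e1.trans e2.symm
  | 1, hb =>
    have hj : j = 0 := by simpa [hookMu] using hb
    subst hj
    exact hl
  | i + 2, hb => simp [hookMu] at hb

/-- Every admissible pair (arm, leg) comes from a conjugate-semistandard hook tableau. -/
theorem exists_tableau (hm : 2 ≤ m) {A : Finset ℕ} {b : ℕ} (hA : A.card = m - 1)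
    (hpos : ∀ a ∈ A, 1 ≤ a) (hb : ∃ a ∈ A, a ≤ b) :
    ∃ t : Box (hookMu m) → ℕ, ConjSemistandard (hookMu m) t ∧ arm m t = A ∧ leg m t = b := by
  have hA' : A.card = hookMu m 0 := by rw [hA]; simp [hookMu]
  have h0 : 0 < hookMu m 0 := by simp [hookMu]; omega
  let f := A.orderEmbOfFin hA'
  let t : Box (hookMu m) → ℕ := fun p =>
    if h : p.1.1 = 0 ∧ p.1.2 < hookMu m 0 then f ⟨p.1.2, h.2⟩ else b
  have t0 : ∀ j (h : j < hookMu m 0), t ⟨(0, j), h⟩ = f ⟨j, h⟩ := fun j h => by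
    exact dif_pos ⟨rfl, h⟩
  have t1 : ∀ j (h : j < hookMu m 1), t ⟨(1, j), h⟩ = b := fun j h => by
    exact dif_neg (by simp)
  have h2 : ∀ i, hookMu m (i + 2) = 0 := fun i => by simp [hookMu]
  have hf0 : f ⟨0, h0⟩ ≤ b := by
    obtain ⟨a, ha, hab⟩ := hb
    refine le_trans ?_ hab
    rw [Finset.orderEmbOfFin_zero hA' h0]
    exact Finset.min'_le _ _ ha
  refine ⟨t, ⟨?_, ?_, ?_⟩, ?_, t1 0 (by simp [hookMu])⟩
  · rintro ⟨⟨i, j⟩, h⟩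
    match i, h with
    | 0, h => rw [t0]; exact hpos _ (Finset.orderEmbOfFin_mem _ _ _)
    | 1, h =>
      rw [t1]
      exact (hpos _ (Finset.orderEmbOfFin_mem A hA' ⟨0, h0⟩)).trans hf0
    | i + 2, h => exact absurd h (by simp [h2])
  · intro i j j' h h' hlt
    match i, h, h' with
    | 0, h, h' => rw [t0, t0]; exact f.strictMono hlt
    | 1, h, h' => simp [hookMu] at h h'; omega
    | i + 2, h, h' => exact absurd h (by simp [h2])
  · intro i i' j h h' hlt
    match i, i', h, h' with
    | 0, 1, h, h' =>
      have hj : j = 0 := by simpa [hookMu] using h'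
      subst hj
      rw [t0, t1]; exact hf0
    | 0, 0, h, h' => omega
    | 1, 0, h, h' => omega
    | 1, 1, h, h' => omega
    | i + 2, _, h, h' => exact absurd h (by simp [h2])
    | _, i' + 2, h, h' => exact absurd h' (by simp [h2])
  · ext a
    rw [mem_arm]
    constructor
    · rintro ⟨j, h, rfl⟩
      rw [t0]; exact Finset.orderEmbOfFin_mem _ _ _
    · intro ha
      have : a ∈ Set.range f := by rw [Finset.range_orderEmbOfFin]; exact ha
      obtain ⟨k, hk⟩ := this
      exact ⟨k.1, k.2, (t0 _ _).trans hk⟩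

theorem tabWeight_zero (h : ConjSemistandard (hookMu m) t) : tabWeight m t 0 = 0 := by
  rw [tabWeight_apply h, if_neg, if_neg]
  · have := leg_pos h; omega
  · intro h0; have := arm_pos h h0; omega

theorem sum_tabWeight_le (hm : 2 ≤ m) (h : ConjSemistandard (hookMu m) t) (s : Finset ℕ) :
    ∑ j ∈ s, tabWeight m t j ≤ m := by
  simp only [tabWeight_apply h, Finset.sum_add_distrib, ← Finset.card_filter]
  have h1 : (s.filter fun j => j ∈ arm m t).card ≤ m - 1 := by
    rw [← card_arm h]
    exact Finset.card_le_card fun j hj => (Finset.mem_filter.mp hj).2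
  have h2 : (s.filter fun j => j = leg m t).card ≤ 1 := by
    rw [← Finset.card_singleton (leg m t)]
    exact Finset.card_le_card fun j hj => by simpa using (Finset.mem_filter.mp hj).2
  omega

theorem familyWeight_eq (T : Finset (Box (hookMu m) → ℕ)) (j : ℕ) :
    familyWeight (hookMu m) 2 T j = ∑ t ∈ T, tabWeight m t j := by
  unfold familyWeight
  refine Finset.sum_congr rfl fun t _ => ?_
  simp [entryCount, tabWeight, Finset.sum_range_succ, Multiset.toFinsupp_apply]

theorem sum_tabKey (T : Finset (Box (hookMu m) → ℕ)) (j : ℕ) :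
    ofColex (∑ t ∈ T, tabKey m t) j = familyWeight (hookMu m) 2 T j := by
  classical
  rw [familyWeight_eq]
  induction T using Finset.induction_on with
  | empty => simp
  | insert a s ha ih => rw [Finset.sum_insert ha, Finset.sum_insert ha, ← ih]; rfl

/-- The keys below a given one confine all entries to a finite range. -/
theorem finite_key_le (x : Box (hookMu m) → ℕ) :
    {y | ConjSemistandard (hookMu m) y ∧ tabKey m y ≤ tabKey m x}.Finite := by
  obtain ⟨M, hM⟩ : ∃ M, ∀ j, M < j → tabWeight m x j = 0 := by
    refine ⟨(tabWeight m x).support.sup id, fun j hj => ?_⟩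
    by_contra hne
    have : j ≤ (tabWeight m x).support.sup id :=
      Finset.le_sup (f := id) (Finsupp.mem_support_iff.mpr hne)
    omega
  have hbound : ∀ y, tabKey m y ≤ tabKey m x → ∀ j, M < j → tabWeight m y j = 0 := by
    intro y hy j hj
    rcases hy.lt_or_eq with h | h
    · obtain ⟨i, hi, hlt⟩ := Finsupp.Colex.lt_iff.mp h
      have hlt' : tabWeight m y i < tabWeight m x i := hlt
      have hiM : i ≤ M := by
        by_contra hc
        have := hM i (by omega)
        omega
      exact (hi j (by omega)).trans (hM j hj)
    · have : tabWeight m y = tabWeight m x := toColex.injective h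
      rw [this]; exact hM j hj
  refine Set.Finite.of_finite_image (f := fun y => (arm m y, leg m y)) ?_ ?_
  · refine Set.Finite.subset
      (((Finset.Iic M).powerset ×ˢ Finset.Iic M).finite_toSet) ?_
    rintro _ ⟨y, ⟨hy, hle⟩, rfl⟩
    have hb := hbound y hle
    simp only [Finset.coe_product, Set.mem_prod, Finset.mem_coe, Finset.mem_powerset,
      Finset.mem_Iic]
    refine ⟨fun a ha => ?_, ?_⟩
    · rw [Finset.mem_Iic]
      by_contra hc
      have := hb a (by omega)
      rw [tabWeight_apply hy, if_pos ha] at this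
      omega
    · by_contra hc
      have := hb (leg m y) (by omega)
      rw [tabWeight_apply hy, if_pos rfl] at this
      omega
  · intro y hy z hz h
    exact ext_arm_leg hy.1 hz.1 (congrArg Prod.fst h) (congrArg Prod.snd h)

theorem exists_many (hm : 2 ≤ m) (n : ℕ) :
    ∃ S : Finset (Box (hookMu m) → ℕ), S.card = n ∧ ∀ y ∈ S, ConjSemistandard (hookMu m) y := by
  classical
  have h : ∀ b : ℕ, ∃ t : Box (hookMu m) → ℕ, ConjSemistandard (hookMu m) t ∧
      arm m t = Finset.Icc 1 (m - 1) ∧ leg m t = b + 1 := fun b =>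
    exists_tableau hm (by simp) (fun a ha => (Finset.mem_Icc.mp ha).1)
      ⟨1, Finset.mem_Icc.mpr ⟨le_rfl, by omega⟩, by omega⟩
  choose g hg using h
  refine ⟨(Finset.range n).image g, ?_, ?_⟩
  · rw [Finset.card_image_of_injective, Finset.card_range]
    intro a b hab
    have h1 := (hg a).2.2
    have h2 := (hg b).2.2
    rw [hab] at h1
    omega
  · intro y hy
    obtain ⟨b, -, rfl⟩ := Finset.mem_image.mp hy
    exact (hg b).1

end Hook

/-! ### Initial families have weakly decreasing weight -/

section Main

variable {m : ℕ} {t x : Box (hookMu m) → ℕ}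

/-- If `j + 1` occurs more often than `j` in `t`, then exchanging the two values in the arm and in
the leg preserves the column condition. -/
theorem exists_swapped_tableau (hm : 2 ≤ m) (h : ConjSemistandard (hookMu m) t) {j : ℕ} (hj : 1 ≤ j)
    (hlt : tabWeight m t j < tabWeight m t (j + 1)) :
    ∃ t', ConjSemistandard (hookMu m) t' ∧
      arm m t' = (arm m t).map (Equiv.swap j (j + 1)).toEmbedding ∧
      leg m t' = Equiv.swap j (j + 1) (leg m t) := by
  refine exists_tableau hm (by rw [Finset.card_map, card_arm h]) ?_ ?_
  · intro a ha
    obtain ⟨c, hc, rfl⟩ := Finset.mem_map.mp ha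
    have := arm_pos h hc
    simp only [Equiv.coe_toEmbedding, Equiv.swap_apply_def]
    split_ifs <;> omega
  · rw [tabWeight_apply h, tabWeight_apply h] at hlt
    by_cases hjA : j ∈ arm m t
    -- If `j` is in the arm, it occurs once and `j + 1` twice, so `j + 1` is both the leg and in
    -- the arm.
    · have h1 : j + 1 ∈ arm m t ∧ j + 1 = leg m t := by
        rw [if_pos hjA] at hlt
        constructor <;> by_contra hc <;> rw [if_neg hc] at hlt <;> split_ifs at hlt <;> omega
      refine ⟨j, Finset.mem_map.mpr ⟨j + 1, h1.1, by simp⟩, ?_⟩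
      rw [← h1.2]; simp
    · have hjl : j ≠ leg m t := by
        intro hc
        rw [if_neg hjA, if_pos hc, if_neg (show ¬ j + 1 = leg m t by omega)] at hlt
        split_ifs at hlt <;> omega
      obtain ⟨a, ha, hab⟩ := exists_arm_le_leg hm h
      refine ⟨Equiv.swap j (j + 1) a, Finset.mem_map.mpr ⟨a, ha, rfl⟩, ?_⟩
      have haj : a ≠ j := fun hc => hjA (hc ▸ ha)
      simp only [Equiv.swap_apply_def]
      split_ifs <;> omega

theorem tabWeight_swap {t' : Box (hookMu m) → ℕ} (h : ConjSemistandard (hookMu m) t)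
    (h' : ConjSemistandard (hookMu m) t') {σ : Equiv.Perm ℕ}
    (ha : arm m t' = (arm m t).map σ.toEmbedding) (hl : leg m t' = σ (leg m t)) (i : ℕ) :
    tabWeight m t' (σ i) = tabWeight m t i := by
  rw [tabWeight_apply h, tabWeight_apply h', ha, hl]
  simp

theorem weaklyDecr_of_isInitial (hm : 2 ≤ m) {v : Colex (ℕ →₀ ℕ)}
    {T : Finset (Box (hookMu m) → ℕ)}
    (hT : IsInitial (ConjSemistandard (hookMu m)) (tabKey m) v T) :
    WeaklyDecr (familyWeight (hookMu m) 2 T) := by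
  classical
  intro j hj
  rw [familyWeight_eq, familyWeight_eq]
  let A := T.filter fun t => tabWeight m t j < tabWeight m t (j + 1)
  have hA : ∀ t ∈ A, ∃ t', ConjSemistandard (hookMu m) t' ∧
      arm m t' = (arm m t).map (Equiv.swap j (j + 1)).toEmbedding ∧
      leg m t' = Equiv.swap j (j + 1) (leg m t) := fun t ht =>
    exists_swapped_tableau hm (hT.1 t (Finset.mem_filter.mp ht).1) hj (Finset.mem_filter.mp ht).2
  choose! σ hσ using hA
  have hPA : ∀ t ∈ A, ConjSemistandard (hookMu m) t := fun t ht =>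
    hT.1 t (Finset.mem_filter.mp ht).1
  have hw : ∀ t ∈ A, ∀ i, tabWeight m (σ t) (Equiv.swap j (j + 1) i) = tabWeight m t i :=
    fun t ht => tabWeight_swap (hPA t ht) (hσ t ht).1 (hσ t ht).2.1 (hσ t ht).2.2
  have hwj : ∀ t ∈ A, tabWeight m (σ t) j = tabWeight m t (j + 1) := fun t ht => by
    simpa using hw t ht (j + 1)
  have hwj' : ∀ t ∈ A, tabWeight m (σ t) (j + 1) = tabWeight m t j := fun t ht => by
    simpa using hw t ht j
  have hinj : Set.InjOn σ A := by
    intro s hs t ht hst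
    refine ext_arm_leg (hPA s hs) (hPA t ht) ?_ ?_
    · have := (hσ s hs).2.1
      rw [hst, (hσ t ht).2.1] at this
      exact (Finset.map_injective _ this).symm
    · have := (hσ s hs).2.2
      rw [hst, (hσ t ht).2.2] at this
      exact ((Equiv.injective _) this).symm
  have hsub : A.image σ ⊆ T \ A := by
    intro y hy
    obtain ⟨t, ht, rfl⟩ := Finset.mem_image.mp hy
    have htA := (Finset.mem_filter.mp ht)
    rw [Finset.mem_sdiff]
    constructor
    · refine hT.2.1 _ (hσ t ht).1 (lt_of_lt_of_le ?_ (hT.2.2 t htA.1))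
      refine Finsupp.Colex.lt_iff.mpr ⟨j + 1, fun i hi => ?_, ?_⟩
      · have := hw t ht i
        rw [Equiv.swap_apply_of_ne_of_ne (by omega) (by omega)] at this
        exact this
      · exact (hwj' t ht).trans_lt htA.2
    · intro hc
      have := (Finset.mem_filter.mp hc).2
      rw [hwj t ht, hwj' t ht] at this
      omega
  have hAT : A ⊆ T := Finset.filter_subset _ _
  have hdiff : ∀ t ∈ T \ A, (0 : ℤ) ≤ (tabWeight m t j : ℤ) - tabWeight m t (j + 1) := by
    intro t ht
    have : ¬ tabWeight m t j < tabWeight m t (j + 1) := fun hc =>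
      (Finset.mem_sdiff.mp ht).2 (Finset.mem_filter.mpr ⟨(Finset.mem_sdiff.mp ht).1, hc⟩)
    omega
  have hsum := Finset.sum_le_sum_of_subset_of_nonneg hsub (fun t ht _ => hdiff t ht)
  rw [Finset.sum_image hinj] at hsum
  have hA' : ∑ t ∈ A, ((tabWeight m (σ t) j : ℤ) - tabWeight m (σ t) (j + 1)) =
      ∑ t ∈ A, -((tabWeight m t j : ℤ) - tabWeight m t (j + 1)) :=
    Finset.sum_congr rfl fun t ht => by rw [hwj t ht, hwj' t ht]; ring
  rw [hA', Finset.sum_neg_distrib] at hsum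
  have htot := Finset.sum_sdiff (f := fun t => (tabWeight m t j : ℤ) - tabWeight m t (j + 1)) hAT
  rw [Finset.sum_sub_distrib (s := T)] at htot
  zify
  linarith

/-! ### Lexicographically minimal families are the initial families -/

theorem mul_familyWeight_le (hm : 2 ≤ m) {S : Finset (Box (hookMu m) → ℕ)}
    (hS : ∀ t ∈ S, ConjSemistandard (hookMu m) t)
    (hd : WeaklyDecr (familyWeight (hookMu m) 2 S)) (i : ℕ) :
    i * familyWeight (hookMu m) 2 S i ≤ m * S.card := by
  calc i * familyWeight (hookMu m) 2 S i
      = ∑ _j ∈ Finset.Icc 1 i, familyWeight (hookMu m) 2 S i := by simp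
    _ ≤ ∑ j ∈ Finset.Icc 1 i, familyWeight (hookMu m) 2 S j :=
        Finset.sum_le_sum fun j hj =>
          hd.antitone (Finset.mem_Icc.mp hj).1 (Finset.mem_Icc.mp hj).2
    _ = ∑ t ∈ S, ∑ j ∈ Finset.Icc 1 i, tabWeight m t j := by
        simp only [familyWeight_eq]; exact Finset.sum_comm
    _ ≤ ∑ _t ∈ S, m := Finset.sum_le_sum fun t ht => sum_tabWeight_le hm (hS t ht) _
    _ = m * S.card := by simp [mul_comm]

theorem lexLT_of_sum_lt (hm : 2 ≤ m) {T S : Finset (Box (hookMu m) → ℕ)}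
    (hS : ∀ t ∈ S, ConjSemistandard (hookMu m) t)
    (hTd : WeaklyDecr (familyWeight (hookMu m) 2 T))
    (hSd : WeaklyDecr (familyWeight (hookMu m) 2 S))
    (hlt : ∑ t ∈ T, tabKey m t < ∑ t ∈ S, tabKey m t) :
    LexLT (conjOf (familyWeight (hookMu m) 2 T) (m * S.card))
      (conjOf (familyWeight (hookMu m) 2 S) (m * S.card)) := by
  obtain ⟨j, hagree, hj⟩ := Finsupp.Colex.lt_iff.mp hlt
  have hj' : familyWeight (hookMu m) 2 T j < familyWeight (hookMu m) 2 S j := by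
    rw [← sum_tabKey, ← sum_tabKey]; exact hj
  refine lexLT_conjOf hTd hSd ?_ ?_ (fun i hi => ?_) hj'
  · -- The entry `0` never occurs, so the weights cannot differ there.
    by_contra hc
    obtain rfl : j = 0 := by omega
    rw [familyWeight_eq S, Finset.sum_eq_zero fun t ht => tabWeight_zero (hS t ht)] at hj'
    omega
  · refine le_trans ?_ (mul_familyWeight_le hm hS hSd j)
    exact Nat.le_mul_of_pos_right _ (by omega)
  · rw [← sum_tabKey, ← sum_tabKey]; exact hagree i hi

theorem isLexMinimal_iff (hm : 2 ≤ m) {n : ℕ} {v : Colex (ℕ →₀ ℕ)}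
    {T₀ : Finset (Box (hookMu m) → ℕ)}
    (hT₀ : IsInitial (ConjSemistandard (hookMu m)) (tabKey m) v T₀) (hc : T₀.card = n)
    (T : Finset (Box (hookMu m) → ℕ)) :
    IsLexMinimalTypeFamily m n T ↔
      T.card = n ∧ IsInitial (ConjSemistandard (hookMu m)) (tabKey m) v T := by
  constructor
  · rintro ⟨hTc, hT, hTd, hmin⟩
    refine ⟨hTc, ?_⟩
    obtain ⟨hle, heq⟩ := hT₀.sum_le hT (hTc.trans hc.symm)
    rcases hle.lt_or_eq with h | h
    · have hd := weaklyDecr_of_isInitial hm hT₀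
      have := lexLT_of_sum_lt hm hT hd hTd h
      rw [hTc] at this
      exact absurd (hmin T₀ hc hT₀.1 hd) this.not_lexLE
    · exact heq h
  · rintro ⟨hTc, hT⟩
    have hd := weaklyDecr_of_isInitial hm hT
    refine ⟨hTc, hT.1, hd, fun S hSc hS hSd => ?_⟩
    rcases (hT.sum_le hS (hSc.trans hTc.symm)).1.lt_or_eq with h | h
    · have := lexLT_of_sum_lt hm hS hd hSd h
      rw [hSc] at this
      exact Or.inr this
    · refine Or.inl fun j _ => ?_
      have : familyWeight (hookMu m) 2 T = familyWeight (hookMu m) 2 S := by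
        funext i
        rw [← sum_tabKey, ← sum_tabKey, h]
      rw [this]

theorem ncard_isLexMinimal (hm : 2 ≤ m) {v : Colex (ℕ →₀ ℕ)}
    {L C : Finset (Box (hookMu m) → ℕ)}
    (hL : ∀ y, y ∈ L ↔ ConjSemistandard (hookMu m) y ∧ tabKey m y < v)
    (hC : ∀ y, y ∈ C ↔ ConjSemistandard (hookMu m) y ∧ tabKey m y = v)
    {e : ℕ} (he : e ≤ C.card) :
    {T : Finset (Box (hookMu m) → ℕ) | IsLexMinimalTypeFamily m (L.card + e) T}.ncard =
      C.card.choose e := by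
  classical
  obtain ⟨D, hD, hDc⟩ := Finset.exists_subset_card_eq he
  have hcard : (L ∪ D).card = L.card + e := by
    rw [Finset.card_union_of_disjoint ((disjoint_below_class hL hC).mono_right hD), hDc]
  rw [← ncard_isInitial hL hC e]
  congr 1
  ext T
  exact isLexMinimal_iff hm (IsInitial.union hL hC hD) hcard T

/-! ### Sizes of the weight classes -/

theorem tabWeight_eq_of_key (h : tabKey m t = tabKey m x) : tabWeight m t = tabWeight m x :=
  toColex.injective h

/-- A weight with a repeated entry is attained once: the repeated entry is the leg. -/
theorem card_class_of_leg_mem (hx : ConjSemistandard (hookMu m) x)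
    {C : Finset (Box (hookMu m) → ℕ)}
    (hC : ∀ y, y ∈ C ↔ ConjSemistandard (hookMu m) y ∧ tabKey m y = tabKey m x)
    (hl : leg m x ∈ arm m x) : C.card = 1 := by
  rw [Finset.card_eq_one]
  refine ⟨x, ?_⟩
  ext y
  rw [hC, Finset.mem_singleton]
  refine ⟨fun ⟨hy, hk⟩ => ?_, fun h => by subst h; exact ⟨hx, rfl⟩⟩
  have hw : ∀ j, (if j ∈ arm m y then 1 else 0) + (if j = leg m y then 1 else 0) =
      (if j ∈ arm m x then 1 else 0) + if j = leg m x then 1 else 0 := fun j => by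
    rw [← tabWeight_apply hy, ← tabWeight_apply hx, tabWeight_eq_of_key hk]
  have hleg : leg m y = leg m x := by
    by_contra hne
    have := hw (leg m x)
    rw [if_pos hl, if_pos rfl, if_neg (Ne.symm hne)] at this
    split_ifs at this <;> omega
  refine ext_arm_leg hy hx ?_ hleg
  ext j
  have := hw j
  rw [hleg] at this
  split_ifs at this <;> simp_all

/-- A weight with `m` distinct entries is attained `m - 1` times: any entry other than the least
one may be the leg. -/
theorem card_class_of_leg_notMem (hm : 2 ≤ m) (hx : ConjSemistandard (hookMu m) x)
    {C : Finset (Box (hookMu m) → ℕ)}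
    (hC : ∀ y, y ∈ C ↔ ConjSemistandard (hookMu m) y ∧ tabKey m y = tabKey m x)
    (hl : leg m x ∉ arm m x) : C.card = m - 1 := by
  classical
  set U := insert (leg m x) (arm m x) with hU
  have hUne : U.Nonempty := Finset.insert_nonempty _ _
  have hUc : U.card = m := by
    rw [hU, Finset.card_insert_of_notMem hl, card_arm hx]; omega
  have hwx : ∀ j, tabWeight m x j = if j ∈ U then 1 else 0 := by
    intro j
    rw [tabWeight_apply hx, hU]
    by_cases h1 : j = leg m x
    · subst h1; simp [hl]
    · simp [h1]
  have hchar : ∀ y, ConjSemistandard (hookMu m) y → (tabKey m y = tabKey m x ↔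
      leg m y ∉ arm m y ∧ insert (leg m y) (arm m y) = U) := by
    intro y hy
    constructor
    · intro hk
      have hw : ∀ j, (if j ∈ arm m y then 1 else 0) + (if j = leg m y then 1 else 0) =
          if j ∈ U then 1 else 0 := fun j => by
        rw [← tabWeight_apply hy, ← hwx, tabWeight_eq_of_key hk]
      refine ⟨fun hc => ?_, ?_⟩
      · have := hw (leg m y)
        rw [if_pos hc, if_pos rfl] at this
        split_ifs at this; omega
      · ext j
        have := hw j
        rw [Finset.mem_insert]
        split_ifs at this <;> simp_all
    · rintro ⟨h1, h2⟩
      refine congrArg toColex (Finsupp.ext fun j => ?_)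
      rw [hwx, tabWeight_apply hy, ← h2]
      by_cases h : j = leg m y
      · subst h; simp [h1]
      · simp [h]
  have : C.card = (U.erase (U.min' hUne)).card := by
    refine Finset.card_bij (fun y _ => leg m y) ?_ ?_ ?_
    · intro y hy
      obtain ⟨hy, hk⟩ := (hC y).1 hy
      obtain ⟨h1, h2⟩ := (hchar y hy).1 hk
      refine Finset.mem_erase.mpr ⟨fun hc => ?_, h2 ▸ Finset.mem_insert_self _ _⟩
      obtain ⟨a, ha, hal⟩ := exists_arm_le_leg hm hy
      have : U.min' hUne ≤ a := Finset.min'_le _ _ (h2 ▸ Finset.mem_insert_of_mem ha)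
      have : a = leg m y := by omega
      exact h1 (this ▸ ha)
    · intro y hy z hz hyz
      obtain ⟨hy, hk⟩ := (hC y).1 hy
      obtain ⟨hz, hk'⟩ := (hC z).1 hz
      obtain ⟨h1, h2⟩ := (hchar y hy).1 hk
      obtain ⟨h3, h4⟩ := (hchar z hz).1 hk'
      refine ext_arm_leg hy hz ?_ hyz
      rw [← Finset.erase_insert h1, ← Finset.erase_insert h3, h2, h4]
      exact congrArg _ hyz
    · intro b hb
      obtain ⟨hb1, hb2⟩ := Finset.mem_erase.mp hb
      obtain ⟨y, hy, hya, hyl⟩ := exists_tableau hm (A := U.erase b) (b := b)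
        (by rw [Finset.card_erase_of_mem hb2, hUc])
        (fun a ha => by
          rcases Finset.mem_insert.mp (Finset.mem_of_mem_erase ha) with h | h
          · rw [h]; exact leg_pos hx
          · exact arm_pos hx h)
        ⟨U.min' hUne, Finset.mem_erase.mpr ⟨Ne.symm hb1, Finset.min'_mem _ _⟩,
          Finset.min'_le _ _ hb2⟩
      refine ⟨y, (hC y).2 ⟨hy, (hchar y hy).2 ?_⟩, hyl⟩
      rw [hya, hyl]
      exact ⟨Finset.notMem_erase _ _, Finset.insert_erase hb2⟩
  rw [this, Finset.card_erase_of_mem (Finset.min'_mem _ _), hUc]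

end Main

/-- **Corollary 8.5 (Paget–Wildon), combinatorial form.** Let `m ≥ 2` and `μ = (m−1,1)`.  For
every `n ≥ 1` the number of conjugate-semistandard tableau families of shape `μ^n` of
lexicographically minimal type is `C(m−1, e)` for some `e ∈ {1, …, m−1}`; moreover every such
value is attained for some `n ≥ 1`. -/
theorem hook_minimal_type_count (m : ℕ) (hm : 2 ≤ m) :
    (∀ n : ℕ, 1 ≤ n → ∃ e, 1 ≤ e ∧ e ≤ m - 1 ∧
      {T : Finset (Box (hookMu m) → ℕ) | IsLexMinimalTypeFamily m n T}.ncard =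
        Nat.choose (m - 1) e) ∧
    (∀ e : ℕ, 1 ≤ e → e ≤ m - 1 → ∃ n : ℕ, 1 ≤ n ∧
      {T : Finset (Box (hookMu m) → ℕ) | IsLexMinimalTypeFamily m n T}.ncard =
        Nat.choose (m - 1) e) := by
  constructor
  · intro n hn
    obtain ⟨x, hx, L, C, hL, hC, hlt, hle⟩ := exists_threshold
      (P := ConjSemistandard (hookMu m)) (key := tabKey m)
      (fun x _ => finite_key_le x) (exists_many hm) n hn
    obtain ⟨e, rfl⟩ := Nat.exists_eq_add_of_lt hlt
    have hcount := ncard_isLexMinimal hm hL hC (e := e + 1) (by omega)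
    rw [← add_assoc] at hcount
    by_cases hl : leg m x ∈ arm m x
    · -- A class of size `1` contributes `1 = C(m - 1, m - 1)`.
      have h1 := card_class_of_leg_mem hx hC hl
      obtain rfl : e = 0 := by omega
      refine ⟨m - 1, by omega, le_rfl, ?_⟩
      rw [hcount, h1]; simp
    · have h1 := card_class_of_leg_notMem hm hx hC hl
      refine ⟨e + 1, by omega, by omega, ?_⟩
      rw [hcount, h1]
  · intro e he hem
    classical
    -- The weight class of the tableaux with entries `1, …, m`, each occurring once.
    obtain ⟨x, hx, hxa, hxl⟩ := exists_tableau hm (A := Finset.Icc 1 (m - 1)) (b := m) (by simp)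
      (fun a ha => (Finset.mem_Icc.mp ha).1)
      ⟨1, Finset.mem_Icc.mpr ⟨le_rfl, by omega⟩, by omega⟩
    have hl : leg m x ∉ arm m x := by
      rw [hxa, hxl, Finset.mem_Icc]; omega
    have hF := finite_key_le x
    have hL : ∀ y, y ∈ hF.toFinset.filter (fun y => tabKey m y < tabKey m x) ↔
        ConjSemistandard (hookMu m) y ∧ tabKey m y < tabKey m x := fun y => by
      simp only [Finset.mem_filter, Set.Finite.mem_toFinset, Set.mem_ofPred_eq]
      exact ⟨fun h => ⟨h.1.1, h.2⟩, fun h => ⟨⟨h.1, h.2.le⟩, h.2⟩⟩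
    have hC : ∀ y, y ∈ hF.toFinset.filter (fun y => tabKey m y = tabKey m x) ↔
        ConjSemistandard (hookMu m) y ∧ tabKey m y = tabKey m x := fun y => by
      simp only [Finset.mem_filter, Set.Finite.mem_toFinset, Set.mem_ofPred_eq]
      exact ⟨fun h => ⟨h.1.1, h.2⟩, fun h => ⟨⟨h.1, h.2.le⟩, h.2⟩⟩
    have hCc := card_class_of_leg_notMem hm hx hC hl
    refine ⟨_, ?_, (ncard_isLexMinimal hm hL hC (e := e) (by omega)).trans (by rw [hCc])⟩
    omega
end

section
/- Let μ be a partition of m ≥ 1 with exactly k parts and let ν be a partition of n ≥ 1 with exactly ℓ parts; let η = μ′ be the conjugate of μ, let c = ν_1, and let ν′ be the conjugate of ν. Define λ by λ_a = n·μ_a for 1 ≤ a ≤ k−1, λ_k = n(μ_k − 1) + ν_1, and λ_{k+i−1} = ν_i for 2 ≤ i ≤ ℓ (and λ_j = 0 for all other j); then λ is weakly decreasing. There is exactly one conjugate-semistandard tableau family tuple of shape η^{ν′} whose weight is λ, and every other conjugate-semistandard tableau family tuple of shape η^{ν′} has weight strictly smaller than λ in the lexicographic order. -/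
/-- The conjugate of a 0-indexed partition `μ` with (at most) `k` parts, again 0-indexed:
`conjFun μ k i = μ′_{i+1} = #{a < k : μ_a ≥ i + 1}`. -/
def conjFun (μ : ℕ → ℕ) (k : ℕ) : ℕ → ℕ := fun i =>
  ((Finset.range k).filter fun a => i < μ a).card

/-- The partition `λ` of Corollary 8.1: `λ_a = n·μ_a` for `1 ≤ a ≤ k−1`,
`λ_k = n(μ_k − 1) + ν_1`, and `λ_{k+i−1} = ν_i` for `2 ≤ i ≤ ℓ` (1-indexed; here `μ`, `ν`
are 0-indexed, so `μ_a = μ (a-1)` etc.). -/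
def lamMax (μ ν : ℕ → ℕ) (n k l : ℕ) : ℕ → ℕ := fun j =>
  if j = 0 then 0
  else if j ≤ k - 1 then n * μ (j - 1)
  else if j = k then n * (μ (k - 1) - 1) + ν 0
  else if j ≤ k + l - 1 then ν (j - k)
  else 0

/-! ### Weights in lexicographic order -/

/-- The unit vector at `a`, in the lexicographically ordered monoid of weights. -/
noncomputable def unitWt (a : ℕ) : Lex (ℕ → ℕ) := toLex (Pi.single a 1)

/-- The weight of a tableau as an element of the lexicographically ordered monoid of weights: every
box contributes the unit vector at its entry. -/
noncomputable def tabWt {η : ℕ → ℕ} [Fintype (Box η)] (t : Box η → ℕ) : Lex (ℕ → ℕ) :=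
  ∑ b, unitWt (t b)

lemma unitWt_apply (a e : ℕ) : ofLex (unitWt a) e = if a = e then 1 else 0 := by
  simp [unitWt, Pi.single_apply, eq_comm]

lemma ofLex_sum_apply {ι : Type*} (s : Finset ι) (f : ι → Lex (ℕ → ℕ)) (e : ℕ) :
    ofLex (∑ i ∈ s, f i) e = ∑ i ∈ s, ofLex (f i) e := by
  classical
  induction s using Finset.induction_on with
  | empty => rfl
  | insert a s ha ih => rw [Finset.sum_insert ha, Finset.sum_insert ha, ← ih]; rfl

lemma unitWt_lt {a b : ℕ} (h : b < a) : unitWt a < unitWt b := by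
  refine ⟨b, fun j hj => ?_, ?_⟩
  · change ofLex (unitWt a) j = ofLex (unitWt b) j
    rw [unitWt_apply, unitWt_apply, if_neg (by omega), if_neg (by omega)]
  · change ofLex (unitWt a) b < ofLex (unitWt b) b
    rw [unitWt_apply, unitWt_apply, if_neg (by omega), if_pos rfl]; exact one_pos

lemma unitWt_le {a b : ℕ} (h : b ≤ a) : unitWt a ≤ unitWt b := by
  rcases h.eq_or_lt with rfl | h
  · exact le_rfl
  · exact (unitWt_lt h).le

/-- Two larger entries cannot compensate for one smaller entry, whatever the other entry `d` is. -/
lemma unitWt_add_lt {a b c : ℕ} (d : ℕ) (ha : c < a) (hb : c < b) :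
    unitWt a + unitWt b < unitWt c + unitWt d := by
  have h : unitWt a + unitWt b < unitWt c := by
    refine ⟨c, fun j hj => ?_, ?_⟩
    · change ofLex (unitWt a) j + ofLex (unitWt b) j = ofLex (unitWt c) j
      rw [unitWt_apply, unitWt_apply, unitWt_apply, if_neg (by omega), if_neg (by omega),
        if_neg (by omega)]
    · change ofLex (unitWt a) c + ofLex (unitWt b) c < ofLex (unitWt c) c
      rw [unitWt_apply, unitWt_apply, unitWt_apply, if_neg (by omega), if_neg (by omega),
        if_pos rfl]; exact one_pos
  refine h.trans_le ?_
  -- zero is the least weight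
  have h0 : (0 : Lex (ℕ → ℕ)) ≤ unitWt d := by
    refine Pi.toLex_monotone (a := (0 : ℕ → ℕ)) (b := Pi.single d 1) ?_
    intro i; exact Nat.zero_le _
  exact le_add_of_nonneg_right h0

/-! ### Families of greatest total value -/

/-- If each `τ p` has strictly larger value than every admissible object outside
`{τ 0, …, τ p}`, then `{τ 0, …, τ (d - 1)}` is the unique family of `d` distinct admissible
objects whose total value is greatest. -/
lemma sum_le_of_top {α M : Type*} [DecidableEq α] [AddCommMonoid M] [LinearOrder M]
    [IsOrderedCancelAddMonoid M] (P : α → Prop) (f : α → M) (τ : ℕ → α)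
    (H : ∀ p t, P t → (∀ q ≤ p, t ≠ τ q) → f t < f (τ p)) (d : ℕ) :
    ∀ T : Finset α, T.card = d → (∀ t ∈ T, P t) →
      ∑ t ∈ T, f t ≤ ∑ p ∈ Finset.range d, f (τ p) ∧
      (∑ t ∈ T, f t = ∑ p ∈ Finset.range d, f (τ p) → T = (Finset.range d).image τ) := by
  induction d with
  | zero =>
    intro T hT _
    rw [Finset.card_eq_zero] at hT
    subst hT
    simp
  | succ d ih =>
    intro T hT hP
    -- by counting, some member of `T` lies outside the first `d` of the `τ p`
    obtain ⟨t, htT, ht⟩ : ∃ t ∈ T, t ∉ (Finset.range d).image τ := by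
      by_contra! hcon
      have h1 := Finset.card_le_card (show T ⊆ (Finset.range d).image τ from hcon)
      have h2 := Finset.card_image_le (s := Finset.range d) (f := τ)
      rw [Finset.card_range] at h2
      omega
    have hne : ∀ q < d, t ≠ τ q := by
      intro q hq h
      exact ht (Finset.mem_image.mpr ⟨q, Finset.mem_range.mpr hq, h.symm⟩)
    have hft : t ≠ τ d → f t < f (τ d) := by
      intro h
      refine H d t (hP t htT) fun q hq => ?_
      rcases hq.eq_or_lt with rfl | hq
      · exact h
      · exact hne q hq
    have hle : f t ≤ f (τ d) := by
      by_cases h : t = τ d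
      · rw [h]
      · exact (hft h).le
    obtain ⟨h1, h2⟩ := ih (T.erase t) (by rw [Finset.card_erase_of_mem htT, hT]; rfl)
      (fun s hs => hP s (Finset.mem_of_mem_erase hs))
    rw [Finset.sum_range_succ, ← Finset.sum_erase_add T f htT]
    refine ⟨add_le_add h1 hle, fun heq => ?_⟩
    obtain ⟨e1, e2⟩ := (add_eq_add_iff_eq_and_eq h1 hle).mp heq
    have htd : t = τ d := by
      by_contra h
      exact (hft h).ne e2
    rw [← Finset.insert_erase htT, h2 e1, Finset.range_add_one, Finset.image_insert, htd]

/-! ### Tableaux and conjugate shapes -/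

lemma entryCount_eq_s14 {η : ℕ → ℕ} [Fintype (Box η)] {N : ℕ} (hN : ∀ i, N ≤ i → η i = 0)
    (t : Box η → ℕ) (e : ℕ) : entryCount η N t e = ofLex (tabWt t) e := by
  rw [tabWt, ofLex_sum_apply]
  simp only [unitWt_apply]
  have h : ∀ i, (rowM η t i).count e = ∑ j ∈ (Finset.range (η i)).attach,
      if t ⟨(i, j.1), Finset.mem_range.mp j.2⟩ = e then 1 else 0 := by
    intro i
    rw [rowM, Multiset.count_map, ← Finset.card_filter]
    simp only [eq_comm (a := e)]
    rfl
  rw [entryCount, Finset.sum_congr rfl fun i _ => h i, Finset.sum_sigma']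
  refine Finset.sum_bij (fun x _ => ⟨(x.1, x.2.1), Finset.mem_range.mp x.2.2⟩) ?_ ?_ ?_ ?_
  · intros; exact Finset.mem_univ _
  · rintro ⟨i, j, hj⟩ _ ⟨i', j', hj'⟩ _ h
    simp only [Subtype.mk.injEq, Prod.mk.injEq] at h
    obtain ⟨rfl, rfl⟩ := h
    rfl
  · rintro ⟨⟨i, j⟩, hb⟩ _
    refine ⟨⟨i, j, Finset.mem_range.mpr hb⟩, ?_, rfl⟩
    simp only [Finset.mem_sigma, Finset.mem_range, Finset.mem_attach, and_true]
    by_contra hi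
    rw [hN i (by omega)] at hb
    exact absurd hb (Nat.not_lt_zero _)
  · intros; rfl

/-- Conjugation of Young diagrams: `(i, j)` is a box of `μ′` iff `(j, i)` is a box of `μ`. -/
lemma lt_conjFun {μ : ℕ → ℕ} (hμ : Antitone μ) {k : ℕ} (hk : ∀ i, k ≤ i → μ i = 0) (i j : ℕ) :
    j < conjFun μ k i ↔ i < μ j := by
  have hset : ∀ c, (∀ a, i < μ a ↔ a < c) → conjFun μ k i = c := by
    intro c hc
    have : (Finset.range k).filter (fun a => i < μ a) = Finset.range c := by
      ext a
      simp only [Finset.mem_filter, Finset.mem_range, ← hc]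
      refine ⟨fun h => h.2, fun h => ⟨?_, h⟩⟩
      by_contra h'
      rw [hk a (by omega)] at h
      omega
    rw [conjFun, this, Finset.card_range]
  -- the rows of length exceeding `i` form an initial segment
  have hex : ∃ a, ¬ i < μ a := ⟨k, by rw [hk k le_rfl]; omega⟩
  classical
  have hc : ∀ a, i < μ a ↔ a < Nat.find hex := by
    intro a
    constructor
    · intro h
      by_contra h'
      exact Nat.find_spec hex (h.trans_le (hμ (not_lt.mp h')))
    · intro h
      exact not_not.mp (Nat.find_min hex h)
  rw [hset _ hc, hc]

lemma finite_box_s14 {η : ℕ → ℕ} {N : ℕ} (hN : ∀ i, N ≤ i → η i = 0) : Finite (Box η) := by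
  refine Finite.of_surjective
    (fun x : (Σ i : Fin N, Fin (η i)) => (⟨(x.1, x.2), x.2.2⟩ : Box η)) ?_
  rintro ⟨⟨i, j⟩, hb⟩
  have hi : i < N := by
    by_contra h
    rw [hN i (by omega)] at hb
    exact absurd hb (Nat.not_lt_zero _)
  exact ⟨⟨⟨i, hi⟩, ⟨j, hb⟩⟩, rfl⟩

/-! ### The tableaux of greatest weight -/

/-- The tableau whose entry in column `j` (from zero) is the least possible value `j + 1`, except
that the box `b₀` has entry `k + p`. -/
def topTab {η : ℕ → ℕ} (b₀ : Box η) (k p : ℕ) (b : Box η) : ℕ :=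
  if b = b₀ then k + p else b.1.2 + 1

lemma ConjSemistandard.lt_entry {η : ℕ → ℕ} {t : Box η → ℕ} (ht : ConjSemistandard η t) :
    ∀ (j i : ℕ) (h : j < η i), j + 1 ≤ t ⟨(i, j), h⟩ := by
  intro j
  induction j with
  | zero => intro i h; exact ht.1 _
  | succ j ih =>
    intro i h
    exact lt_of_le_of_lt (ih i (by omega)) (ht.2.1 i j (j + 1) (by omega) h (by omega))

lemma topTab_injective {η : ℕ → ℕ} (b₀ : Box η) (k : ℕ) :
    Function.Injective (topTab b₀ k) := by
  intro p q h
  have := congrFun h b₀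
  simp only [topTab, if_true] at this
  omega

lemma topTab_conjSemistandard {η : ℕ → ℕ} (b₀ : Box η) {k : ℕ} (hcol : b₀.1.2 + 1 = k)
    (hcols : ∀ b : Box η, b.1.2 < k) (hbot : ∀ b : Box η, b.1.2 + 1 = k → b.1.1 ≤ b₀.1.1)
    (p : ℕ) : ConjSemistandard η (topTab b₀ k p) := by
  refine ⟨fun b => ?_, fun i j j' h h' hj => ?_, fun i i' j h h' hi => ?_⟩
  · unfold topTab
    split_ifs <;> omega
  · have h1 : (⟨(i, j), h⟩ : Box η) ≠ b₀ := by
      rintro rfl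
      have := hcols ⟨(i, j'), h'⟩
      simp only at this hcol
      omega
    have := hcols ⟨(i, j'), h'⟩
    simp only [topTab, if_neg h1] at this ⊢
    split_ifs <;> omega
  · have h1 : (⟨(i, j), h⟩ : Box η) ≠ b₀ := by
      rintro rfl
      have := hbot ⟨(i', j), h'⟩ hcol
      simp only at this
      omega
    have := hcols ⟨(i', j), h'⟩
    simp only [topTab, if_neg h1] at this ⊢
    split_ifs <;> omega

/-- Suppose a box `b ≠ b₀` in column `j` of `t` has an entry larger than the least possible one,
`j + 1`. Then the entry at `b₀` exceeds `j + 1` too, so the boxes `b` and `b₀` together already lose. Otherwise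
`t` is some `topTab b₀ k q`, and `q` exceeds `p`. -/
lemma tabWt_lt_topTab {η : ℕ → ℕ} [Fintype (Box η)] (b₀ : Box η) {k : ℕ} (hcol : b₀.1.2 + 1 = k)
    (hcols : ∀ b : Box η, b.1.2 < k) (hbot : ∀ b : Box η, b.1.2 + 1 = k → b.1.1 ≤ b₀.1.1)
    (p : ℕ) (t : Box η → ℕ) (ht : ConjSemistandard η t) (hne : ∀ q ≤ p, t ≠ topTab b₀ k q) :
    tabWt t < tabWt (topTab b₀ k p) := by
  classical
  have hge : ∀ b, b.1.2 + 1 ≤ t b := fun b => ht.lt_entry b.1.2 b.1.1 b.2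
  have h0 := hge b₀
  unfold tabWt
  rw [← Finset.add_sum_erase _ _ (Finset.mem_univ b₀),
    ← Finset.add_sum_erase _ (fun b => unitWt (topTab b₀ k p b)) (Finset.mem_univ b₀)]
  by_cases hbad : ∃ b, b ≠ b₀ ∧ t b ≠ b.1.2 + 1
  · obtain ⟨b, hb, htb⟩ := hbad
    have hb' : b ∈ Finset.univ.erase b₀ := Finset.mem_erase.mpr ⟨hb, Finset.mem_univ b⟩
    rw [← Finset.add_sum_erase _ _ hb',
      ← Finset.add_sum_erase _ (fun b => unitWt (topTab b₀ k p b)) hb', ← add_assoc, ← add_assoc]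
    refine add_lt_add_of_lt_of_le ?_ (Finset.sum_le_sum fun x hx => unitWt_le ?_)
    · have h1 : b.1.2 + 1 < t b := lt_of_le_of_ne (hge b) (Ne.symm htb)
      have h2 : b.1.2 + 1 < t b₀ := by
        rcases (hcols b).nat_succ_le.lt_or_eq with h | h
        · omega
        -- both boxes lie in the last column, whose lowest box is `b₀`
        · obtain ⟨⟨i, j⟩, hij⟩ := b
          obtain ⟨⟨i₀, j₀⟩, hij₀⟩ := b₀
          simp only at *
          obtain rfl : j = j₀ := by omega
          have hi : i ≤ i₀ := hbot ⟨(i, j), hij⟩ h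
          have hi' : i ≠ i₀ := by
            rintro rfl
            exact hb rfl
          exact h1.trans_le (ht.2.2 i i₀ j hij hij₀ (by omega))
      simp only [topTab, if_true, if_neg hb]
      rw [add_comm (unitWt (k + p))]
      exact unitWt_add_lt _ h2 h1
    · simp only [Finset.mem_erase] at hx
      simp only [topTab, if_neg hx.2.1]
      exact hge x
  · push Not at hbad
    have htq : t = topTab b₀ k (t b₀ - k) := by
      funext b
      unfold topTab
      split_ifs with h
      · rw [h]; omega
      · exact hbad b h
    have hq : p < t b₀ - k := by
      by_contra h
      exact hne _ (not_lt.mp h) htq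
    refine add_lt_add_of_lt_of_le (unitWt_lt ?_) (Finset.sum_le_sum fun x hx => unitWt_le ?_)
    · simp only [topTab, if_true]; omega
    · simp only [Finset.mem_erase] at hx
      simp only [topTab, if_neg hx.1]
      exact hge x

/-! ### Evaluation of the greatest weight -/

/-- Apart from the box `b₀`, column `j` of `topTab` consists of entries `j + 1` only. -/
lemma ofLex_tabWt_topTab {μ : ℕ → ℕ} (hμ : Antitone μ) {k : ℕ} (hk : ∀ i, k ≤ i → μ i = 0)
    [Fintype (Box (conjFun μ k))] (b₀ : Box (conjFun μ k)) (hcol : b₀.1.2 + 1 = k) (p e : ℕ) :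
    ofLex (tabWt (topTab b₀ k p)) e =
      (if e = 0 then 0 else μ (e - 1) - if e = k then 1 else 0) + if k + p = e then 1 else 0 := by
  classical
  rw [tabWt, ofLex_sum_apply]
  simp only [unitWt_apply]
  rw [← Finset.sum_erase_add _ _ (Finset.mem_univ b₀)]
  congr 1
  · rw [Finset.sum_congr rfl (g := fun b : Box (conjFun μ k) => if b.1.2 + 1 = e then 1 else 0)
      (fun b hb => by rw [topTab, if_neg (Finset.ne_of_mem_erase hb)])]
    rcases Nat.eq_zero_or_pos e with rfl | he
    · simp
    have hall : ∑ b : Box (conjFun μ k), (if b.1.2 + 1 = e then 1 else 0) = μ (e - 1) := by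
      rw [← Finset.card_filter]
      conv_rhs => rw [← Finset.card_range (μ (e - 1))]
      refine Finset.card_bij (fun b _ => b.1.1) ?_ ?_ ?_
      · rintro ⟨⟨i, j⟩, hb⟩ h
        simp only [Finset.mem_filter, Finset.mem_univ, true_and, Finset.mem_range] at h ⊢
        subst h
        exact (lt_conjFun hμ hk i j).mp hb
      · rintro ⟨⟨i, j⟩, hb⟩ h ⟨⟨i', j'⟩, hb'⟩ h' hi
        simp only [Finset.mem_filter, Finset.mem_univ, true_and] at h h' hi
        obtain rfl : j = j' := by omega
        subst hi
        rfl
      · intro i hi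
        refine ⟨⟨(i, e - 1), (lt_conjFun hμ hk i _).mpr (Finset.mem_range.mp hi)⟩, ?_, rfl⟩
        simp only [Finset.mem_filter, Finset.mem_univ, true_and]
        omega
    have := Finset.sum_erase_add Finset.univ
      (fun b : Box (conjFun μ k) => if b.1.2 + 1 = e then 1 else 0) (Finset.mem_univ b₀)
    rw [hall] at this
    simp only [hcol, eq_comm (a := k)] at this
    rw [if_neg (by omega)]
    omega
  · simp [topTab]

/-- Each `p` lies in the range of `ν′_i` for exactly `ν p` indices `i`. -/
lemma sum_conjFun {ν : ℕ → ℕ} (hν : Antitone ν) {l : ℕ} (hl : ∀ i, l ≤ i → ν i = 0) {M : Type*}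
    [AddCommMonoid M] (f : ℕ → M) :
    ∑ i : Fin (ν 0), ∑ p ∈ Finset.range (conjFun ν l i), f p =
      ∑ p ∈ Finset.range l, ν p • f p := by
  have h : ∀ i, Finset.range (conjFun ν l i) = (Finset.range l).filter fun p => i < ν p := by
    intro i
    ext p
    simp only [Finset.mem_range, Finset.mem_filter, lt_conjFun hν hl]
    refine ⟨fun h => ⟨?_, h⟩, fun h => h.2⟩
    by_contra h'
    rw [hl p (by omega)] at h
    omega
  simp only [h, Finset.sum_filter]
  rw [Finset.sum_comm]
  refine Finset.sum_congr rfl fun p _ => ?_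
  rw [Fin.sum_univ_eq_sum_range (fun i => if i < ν p then f p else 0), ← Finset.sum_filter,
    Finset.sum_const]
  congr 1
  conv_rhs => rw [← Finset.card_range (ν p)]
  congr 1
  ext i
  have := hν (Nat.zero_le p)
  simp only [Finset.mem_range, Finset.mem_filter]
  omega

lemma lamMax_of_lt (μ ν : ℕ → ℕ) (n l : ℕ) {k j : ℕ} (hj : 1 ≤ j) (hjk : j < k) :
    lamMax μ ν n k l j = n * μ (j - 1) := by
  have h1 : j ≠ 0 := by omega
  have h2 : j ≤ k - 1 := by omega
  simp only [lamMax, if_neg h1, if_pos h2]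

lemma lamMax_self (μ ν : ℕ → ℕ) (n l : ℕ) {k : ℕ} (hk : 1 ≤ k) :
    lamMax μ ν n k l k = n * (μ (k - 1) - 1) + ν 0 := by
  have h1 : k ≠ 0 := by omega
  have h2 : ¬ k ≤ k - 1 := by omega
  simp only [lamMax, if_neg h1, if_neg h2, if_true]

lemma lamMax_of_gt (μ : ℕ → ℕ) {ν : ℕ → ℕ} (n : ℕ) {l : ℕ} (hl : ∀ i, l ≤ i → ν i = 0) {k j : ℕ}
    (hkj : k < j) : lamMax μ ν n k l j = ν (j - k) := by
  have h1 : j ≠ 0 := by omega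
  have h2 : ¬ j ≤ k - 1 := by omega
  have h3 : j ≠ k := by omega
  simp only [lamMax, if_neg h1, if_neg h2, if_neg h3]
  split_ifs with h
  · rfl
  · rw [hl _ (by omega)]

/-- **Corollary 8.1 (Paget–Wildon) / Conjecture 1.2 of Agaoka, combinatorial form.** Let `μ` be a
partition of `m ≥ 1` with exactly `k` parts and `ν` a partition of `n ≥ 1` with exactly `ℓ`
parts; let `η = μ′` and `c = ν_1`.  The sequence `λ = lamMax` is weakly decreasing; there is
exactly one conjugate-semistandard tableau family tuple of shape `η^{ν′}` (a tuple
`(𝒯_1, …, 𝒯_c)` where `𝒯_i` is a family of `ν′_i` conjugate-semistandard `η`-tableaux) whose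
weight is `λ`, and every other such tuple has weight strictly smaller than `λ` in the
lexicographic order. -/
theorem lex_greatest_tuple
    (μ : ℕ → ℕ) (hμ : ∀ i, μ (i + 1) ≤ μ i)
    (m k : ℕ) (hm1 : 1 ≤ m) (hmsum : m = ∑ i ∈ Finset.range k, μ i)
    (hkpos : ∀ i, i < k → 0 < μ i) (hk : ∀ i, k ≤ i → μ i = 0)
    (ν : ℕ → ℕ) (hν : ∀ i, ν (i + 1) ≤ ν i)
    (n l : ℕ) (hn1 : 1 ≤ n) (hnsum : n = ∑ i ∈ Finset.range l, ν i)
    (hlpos : ∀ i, i < l → 0 < ν i) (hl : ∀ i, l ≤ i → ν i = 0) :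
    (∀ j, 1 ≤ j → lamMax μ ν n k l (j + 1) ≤ lamMax μ ν n k l j) ∧
    (∃! 𝒯 : Fin (ν 0) → Finset (Box (conjFun μ k) → ℕ),
      (∀ i, (𝒯 i).card = conjFun ν l i.1) ∧
      (∀ i, ∀ t ∈ 𝒯 i, ConjSemistandard (conjFun μ k) t) ∧
      (∀ j, (∑ i : Fin (ν 0), familyWeight (conjFun μ k) (μ 0) (𝒯 i) j) =
        lamMax μ ν n k l j)) ∧
    (∀ 𝒯 : Fin (ν 0) → Finset (Box (conjFun μ k) → ℕ),
      (∀ i, (𝒯 i).card = conjFun ν l i.1) →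
      (∀ i, ∀ t ∈ 𝒯 i, ConjSemistandard (conjFun μ k) t) →
      (∃ j, (∑ i : Fin (ν 0), familyWeight (conjFun μ k) (μ 0) (𝒯 i) j) ≠
        lamMax μ ν n k l j) →
      LexLT (fun j => ∑ i : Fin (ν 0), familyWeight (conjFun μ k) (μ 0) (𝒯 i) j)
        (lamMax μ ν n k l)) := by
  classical
  have hμa : Antitone μ := antitone_nat_of_succ_le hμ
  have hνa : Antitone ν := antitone_nat_of_succ_le hν
  have hk1 : 1 ≤ k := by
    rcases Nat.eq_zero_or_pos k with rfl | h
    · simp at hmsum; omega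
    · exact h
  have hl1 : 1 ≤ l := by
    rcases Nat.eq_zero_or_pos l with rfl | h
    · simp at hnsum; omega
    · exact h
  have hr : 0 < μ (k - 1) := hkpos _ (by omega)
  have hν0 : ν 0 ≤ n := by
    rw [hnsum]
    exact Finset.single_le_sum (f := ν) (fun _ _ => Nat.zero_le _) (Finset.mem_range.mpr hl1)
  have hN : ∀ i, μ 0 ≤ i → conjFun μ k i = 0 := by
    intro i hi
    by_contra h
    have := (lt_conjFun hμa hk i 0).mp (Nat.pos_of_ne_zero h)
    omega
  have := finite_box_s14 hN
  have := Fintype.ofFinite (Box (conjFun μ k))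
  -- the lowest box of the last column
  obtain ⟨b₀, hb₀⟩ : ∃ b₀ : Box (conjFun μ k), b₀.1 = (μ (k - 1) - 1, k - 1) :=
    ⟨⟨(μ (k - 1) - 1, k - 1), (lt_conjFun hμa hk _ (k - 1)).mpr (Nat.sub_lt hr one_pos)⟩, rfl⟩
  have hcol : b₀.1.2 + 1 = k := by rw [hb₀]; simp only; omega
  have hcols : ∀ b : Box (conjFun μ k), b.1.2 < k := by
    intro b
    by_contra h
    have := (lt_conjFun hμa hk _ _).mp b.2
    rw [hk _ (not_lt.mp h)] at this
    omega
  have hbot : ∀ b : Box (conjFun μ k), b.1.2 + 1 = k → b.1.1 ≤ b₀.1.1 := by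
    intro b hb
    have := (lt_conjFun hμa hk _ _).mp b.2
    rw [show b.1.2 = k - 1 by omega] at this
    have h0 : b₀.1.1 = μ (k - 1) - 1 := by rw [hb₀]
    omega
  have htop := sum_le_of_top (ConjSemistandard (conjFun μ k)) tabWt (topTab b₀ k)
    (tabWt_lt_topTab b₀ hcol hcols hbot)
  have hwt : ∀ (𝒯 : Fin (ν 0) → Finset (Box (conjFun μ k) → ℕ)) (j : ℕ),
      ∑ i, familyWeight (conjFun μ k) (μ 0) (𝒯 i) j = ofLex (∑ i, ∑ t ∈ 𝒯 i, tabWt t) j := by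
    intro 𝒯 j
    rw [ofLex_sum_apply]
    refine Finset.sum_congr rfl fun i _ => ?_
    rw [ofLex_sum_apply, familyWeight]
    exact Finset.sum_congr rfl fun t _ => entryCount_eq_s14 hN t j
  have hlam : ∀ j, ofLex (∑ i : Fin (ν 0), ∑ p ∈ Finset.range (conjFun ν l i),
      tabWt (topTab b₀ k p)) j = lamMax μ ν n k l j := by
    intro j
    rw [sum_conjFun hνa hl, ofLex_sum_apply]
    have hs : ∀ p ∈ Finset.range l, ofLex (ν p • tabWt (topTab b₀ k p)) j =
        ν p * (if j = 0 then 0 else μ (j - 1) - if j = k then 1 else 0) +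
          if k + p = j then ν p else 0 := by
      intro p _
      change ν p • ofLex (tabWt (topTab b₀ k p)) j = _
      rw [ofLex_tabWt_topTab hμa hk b₀ hcol, smul_eq_mul, mul_add]
      congr 1
      split_ifs <;> simp
    rw [Finset.sum_congr rfl hs, Finset.sum_add_distrib, ← Finset.sum_mul, ← hnsum]
    have h2 : ∑ p ∈ Finset.range l, (if k + p = j then ν p else 0) =
        if k ≤ j then ν (j - k) else 0 := by
      split_ifs with h
      · rcases lt_or_ge (j - k) l with hj | hj
        · rw [Finset.sum_eq_single_of_mem (j - k) (Finset.mem_range.mpr hj), if_pos (by omega)]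
          intro p _ hp
          rw [if_neg (by omega)]
        · rw [hl _ hj]
          refine Finset.sum_eq_zero fun p hp => ?_
          rw [Finset.mem_range] at hp
          rw [if_neg (by omega)]
      · refine Finset.sum_eq_zero fun p hp => ?_
        rw [if_neg (by omega)]
    rw [h2]
    rcases Nat.eq_zero_or_pos j with rfl | hj
    · have h : ¬ k ≤ 0 := by omega
      simp [lamMax, h]
    have hj0 : j ≠ 0 := by omega
    rw [if_neg hj0]
    rcases lt_trichotomy j k with h | h | h
    · have h' : ¬ k ≤ j := by omega
      rw [lamMax_of_lt μ ν n l hj h, if_neg h.ne, if_neg h', Nat.sub_zero, add_zero]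
    · subst h
      rw [lamMax_self μ ν n l hj, if_pos rfl, if_pos le_rfl, Nat.sub_self]
    · have h' : k ≤ j - 1 := by omega
      rw [lamMax_of_gt μ n hl h, if_pos h.le, hk _ h', Nat.zero_sub, mul_zero, zero_add]
  have hmax : ∀ 𝒯 : Fin (ν 0) → Finset (Box (conjFun μ k) → ℕ),
      (∀ i, (𝒯 i).card = conjFun ν l i.1) →
      (∀ i, ∀ t ∈ 𝒯 i, ConjSemistandard (conjFun μ k) t) →
      ∑ i, ∑ t ∈ 𝒯 i, tabWt t ≤
        ∑ i : Fin (ν 0), ∑ p ∈ Finset.range (conjFun ν l i), tabWt (topTab b₀ k p) :=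
    fun 𝒯 h1 h2 => Finset.sum_le_sum fun i _ => (htop _ (𝒯 i) (h1 i) (h2 i)).1
  refine ⟨?_, ⟨fun i => (Finset.range (conjFun ν l i)).image (topTab b₀ k), ⟨?_, ?_, ?_⟩, ?_⟩, ?_⟩
  · intro j hj
    rcases lt_trichotomy (j + 1) k with h | h | h
    · rw [lamMax_of_lt μ ν n l (by omega) h, lamMax_of_lt μ ν n l hj (by omega)]
      exact Nat.mul_le_mul_left _ (hμa (by omega))
    · rw [h, lamMax_self μ ν n l hk1, lamMax_of_lt μ ν n l hj (by omega)]
      calc n * (μ (k - 1) - 1) + ν 0 ≤ n * (μ (k - 1) - 1) + n := by omega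
        _ = n * μ (k - 1) := by
          rw [← Nat.mul_succ]
          congr 1
          omega
        _ ≤ n * μ (j - 1) := Nat.mul_le_mul_left _ (hμa (by omega))
    · rw [lamMax_of_gt μ n hl h]
      rcases (show k ≤ j by omega).eq_or_lt with rfl | h'
      · rw [lamMax_self μ ν n l hk1]
        exact (hνa (Nat.zero_le _)).trans (Nat.le_add_left _ _)
      · rw [lamMax_of_gt μ n hl h']
        exact hνa (by omega)
  · intro i
    rw [Finset.card_image_of_injective _ (topTab_injective b₀ k), Finset.card_range]
  · intro i t ht
    obtain ⟨p, _, rfl⟩ := Finset.mem_image.mp ht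
    exact topTab_conjSemistandard b₀ hcol hcols hbot p
  · intro j
    rw [hwt, ← hlam]
    simp only [Finset.sum_image (topTab_injective b₀ k).injOn]
  · rintro 𝒯 ⟨h1, h2, h3⟩
    have heq : ∑ i, ∑ t ∈ 𝒯 i, tabWt t =
        ∑ i : Fin (ν 0), ∑ p ∈ Finset.range (conjFun ν l i), tabWt (topTab b₀ k p) := by
      refine ofLex_inj.mp (funext fun j => ?_)
      rw [← hwt, h3, hlam]
    rw [Finset.sum_eq_sum_iff_of_le fun i _ => (htop _ (𝒯 i) (h1 i) (h2 i)).1] at heq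
    funext i
    exact (htop _ (𝒯 i) (h1 i) (h2 i)).2 (heq i (Finset.mem_univ i))
  · rintro 𝒯 h1 h2 ⟨j, hj⟩
    have hlt := lt_of_le_of_ne (hmax 𝒯 h1 h2) (by
      intro h
      rw [hwt, h, hlam] at hj
      exact hj rfl)
    obtain ⟨a, ha, ha'⟩ := hlt
    change ofLex (∑ i, ∑ t ∈ 𝒯 i, tabWt t) a < ofLex (∑ i : Fin (ν 0),
      ∑ p ∈ Finset.range (conjFun ν l i), tabWt (topTab b₀ k p)) a at ha'
    rw [← hwt, hlam] at ha'
    refine ⟨a, ?_, fun j' _ hj' => ?_, ha'⟩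
    · rcases Nat.eq_zero_or_pos a with rfl | h
      -- the index `0` cannot witness a strict inequality, as `λ` vanishes there
      · simp [lamMax] at ha'
      · exact h
    · have := ha j' hj'
      change ofLex (∑ i, ∑ t ∈ 𝒯 i, tabWt t) j' = ofLex (∑ i : Fin (ν 0),
        ∑ p ∈ Finset.range (conjFun ν l i), tabWt (topTab b₀ k p)) j' at this
      rwa [← hwt, hlam] at this
end
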